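/- arXiv:1904.09347 — 4 statements merged into one kernel-verified Lean document; each statement's English description precedes it below -/
import Mathlib

section
/- Fix d ∈ ℕ and a, b ∈ [1,∞), and let f be the density on ℝ^d given by f(x) = C_{d,a,b} ‖x‖^{a−1} (1−‖x‖)^{b−1} 1{‖x‖ ≤ 1}, where C_{d,a,b} := Γ(a+b+d−1)/(d V_d Γ(a+d−1) Γ(b)). Then for any α, β > 0 and any λ ∈ (0, b/(b+d−1)), there exists C₀ > 0, depending only on d, a, b, α, β and λ, such that f ∈ 𝒢_{d,(α,β,λ,C)} for every C ≥ C₀. -/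
open MeasureTheory Filter Set
open scoped ENNReal NNReal BigOperators Topology

noncomputable section

/-- Euclidean space `ℝ^d`. -/
abbrev Euc (d : ℕ) := EuclideanSpace ℝ (Fin d)

/-- `V_d`, the Lebesgue measure of the unit Euclidean ball in `ℝ^d`. -/
def Vball (d : ℕ) : ℝ := Real.pi ^ ((d : ℝ) / 2) / Real.Gamma (1 + (d : ℝ) / 2)

/-- `f` is a probability density on `ℝ^d`. -/
def IsDensity {d : ℕ} (f : Euc d → ℝ) : Prop :=
  Measurable f ∧ (∀ x, 0 ≤ f x) ∧ (∫ x, f x) = 1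

/-- `β̲ = ⌈β⌉ - 1`. -/
def lfl (β : ℝ) : ℕ := ⌈β⌉₊ - 1

/-- The set of admissible constants in the definition of the local smoothness
functional `M_{f,β}(x)`. -/
def MSet {d : ℕ} (β : ℝ) (f : Euc d → ℝ) (x : Euc d) : Set ℝ :=
  {M : ℝ | 1 ≤ M ∧ 0 < f x ∧ ContDiffAt ℝ (lfl β : ℕ∞) f x ∧
    (∀ t : ℕ, 1 ≤ t → t ≤ lfl β →
      (‖iteratedFDeriv ℝ t f x‖ / f x) ^ ((t : ℝ)⁻¹) ≤ M) ∧
    ∀ y ∈ Metric.closedBall x ((2 * Real.sqrt d * M)⁻¹),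
      ∀ z ∈ Metric.closedBall x ((2 * Real.sqrt d * M)⁻¹), y ≠ z →
        (‖iteratedFDeriv ℝ (lfl β) f z - iteratedFDeriv ℝ (lfl β) f y‖ /
            (f x * ‖z - y‖ ^ (β - (lfl β : ℝ)))) ^ β⁻¹ ≤ M}

/-- The local smoothness functional `M_{f,β}(x)`, equal to `∞` when no admissible
constant exists. -/
def Mloc {d : ℕ} (β : ℝ) (f : Euc d → ℝ) (x : Euc d) : ℝ≥0∞ :=
  sInf (ENNReal.ofReal '' MSet β f x)

/-- `M_β(x) = max(M_{f,β}(x), M_{g,β}(x))`. -/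
def MlocPair {d : ℕ} (β : ℝ) (f g : Euc d → ℝ) (x : Euc d) : ℝ≥0∞ :=
  max (Mloc β f x) (Mloc β g x)

/-- The class `𝒢_{d,(α,β,λ,C)}` of densities. -/
def Gclass (d : ℕ) (α β lam C : ℝ) : Set (Euc d → ℝ) :=
  {f | IsDensity f ∧
    (∫⁻ x, ENNReal.ofReal (‖x‖ ^ α * f x)) ≤ ENNReal.ofReal C ∧
    (∀ x, f x ≤ C) ∧
    (∫⁻ x in {x | 0 < f x},
        ENNReal.ofReal (f x) * (Mloc β f x ^ (d : ℝ) / ENNReal.ofReal (f x)) ^ lam)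
      ≤ ENNReal.ofReal C}

/-- The support intersection `𝒳 = {x : f(x) > 0, g(x) > 0}`. -/
def suppXY {d : ℕ} (f g : Euc d → ℝ) : Set (Euc d) := {x | 0 < f x ∧ 0 < g x}

/-- The class `ℱ_{d,ϑ}` of pairs of densities, `ϑ = (α,β,λ₁,λ₂,γ,C)`. -/
def Fclass (d : ℕ) (α β lam1 lam2 γ C : ℝ) : Set ((Euc d → ℝ) × (Euc d → ℝ)) :=
  {p | p.1 ∈ Gclass d α β lam1 C ∧ IsDensity p.2 ∧
    (∫⁻ x, ENNReal.ofReal (‖x‖ ^ C⁻¹ * p.2 x)) ≤ ENNReal.ofReal C ∧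
    (∀ x, p.2 x ≤ C) ∧
    (∫⁻ x in suppXY p.1 p.2, ENNReal.ofReal (p.1 x ^ 2 * p.2 x ^ (-γ)))
      ≤ ENNReal.ofReal C ∧
    (∫⁻ x in suppXY p.1 p.2,
        ENNReal.ofReal (p.1 x) *
          ((MlocPair β p.1 p.2 x ^ (d : ℝ) / ENNReal.ofReal (p.1 x)) ^ lam1 +
            (MlocPair β p.1 p.2 x ^ (d : ℝ) / ENNReal.ofReal (p.2 x)) ^ lam2))
      ≤ ENNReal.ofReal C}

/-- `φ_{jl} = ∂^{j+l} φ / ∂u^j ∂v^l`. -/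
def phiD {d : ℕ} (φ : ℝ → ℝ → Euc d → ℝ) (j l : ℕ) (u v : ℝ) (x : Euc d) : ℝ :=
  iteratedDeriv j (fun u' => iteratedDeriv l (fun v' => φ u' v' x) v) u

/-- The class `Φ(ξ)` of smooth functionals, `ξ = (κ₁,κ₂,β₁*,β₂*,L)`. -/
def PhiClass (d : ℕ) (κ1 κ2 b1 b2 L : ℝ) : Set (ℝ → ℝ → Euc d → ℝ) :=
  {φ |
    (∀ u v : ℝ, 0 < u → 0 < v → ∀ x : Euc d,
      ContDiffAt ℝ (lfl b2 : ℕ∞) (fun v' => φ u v' x) v) ∧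
    (∀ l2 : ℕ, l2 ≤ lfl b2 → ∀ u v : ℝ, 0 < u → 0 < v → ∀ x : Euc d,
      ContDiffAt ℝ (lfl b1 : ℕ∞) (fun u' => iteratedDeriv l2 (fun v' => φ u' v' x) v) u) ∧
    (∀ u v : ℝ, 0 < u → 0 < v → ∀ x : Euc d, ∀ e1 e2 : ℝ, |e1| < L⁻¹ → |e2| < L⁻¹ →
      |φ (u * (1 + e1)) (v * (1 + e2)) x -
          ∑ l1 ∈ Finset.range (lfl b1 + 1), ∑ l2 ∈ Finset.range (lfl b2 + 1),
            (u * e1) ^ l1 * (v * e2) ^ l2 /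
                ((Nat.factorial l1 : ℝ) * (Nat.factorial l2 : ℝ)) *
              phiD φ l1 l2 u v x| ≤
        L * max (u ^ (-κ1)) (u ^ L) * max (v ^ (-κ2)) (v ^ L) *
          (|e1| ^ b1 + |e2| ^ b2)) ∧
    (∀ u v : ℝ, 0 < u → 0 < v → ∀ x : Euc d, ∀ l1 l2 : ℕ, l1 ≤ lfl b1 → l2 ≤ lfl b2 →
      |u ^ l1 * v ^ l2 * phiD φ l1 l2 u v x| ≤
        L * max (u ^ (-κ1)) (u ^ L) * max (v ^ (-κ2)) (v ^ L)) ∧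
    (∀ η : ℝ, 0 < η → ∃ r : ℝ, 0 < r ∧ ∀ e3 : Euc d, ‖e3‖ ≤ r →
      ∀ u v : ℝ, 0 < u → 0 < v → ∀ x : Euc d,
        |φ u v (x + e3) / φ u v x - 1| ≤ η ∧
        |phiD φ 1 0 u v (x + e3) / phiD φ 1 0 u v x - 1| ≤ η ∧
        |phiD φ 0 1 u v (x + e3) / phiD φ 0 1 u v x - 1| ≤ η)}

/-- Distance from `X i` to its `k`-th nearest neighbour in `{X j : j ≠ i}`. -/
def nnDistX {d m : ℕ} (k : ℕ) (X : Fin m → Euc d) (i : Fin m) : ℝ :=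
  sInf {r : ℝ | 0 ≤ r ∧
    k ≤ ((Finset.univ.erase i).filter fun j => dist (X j) (X i) ≤ r).card}

/-- Distance from `x` to its `k`-th nearest neighbour in `{Y j}`. -/
def nnDistY {d n : ℕ} (k : ℕ) (Y : Fin n → Euc d) (x : Euc d) : ℝ :=
  sInf {r : ℝ | 0 ≤ r ∧ k ≤ (Finset.univ.filter fun j => dist (Y j) x ≤ r).card}

/-- `f̂_{(kX),i}`. -/
def fhat {d m : ℕ} (kX : ℕ) (X : Fin m → Euc d) (i : Fin m) : ℝ :=
  (kX : ℝ) / (m * Vball d * nnDistX kX X i ^ d)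

/-- `ĝ_{(kY)}` evaluated at `x`. -/
def ghat {d n : ℕ} (kY : ℕ) (Y : Fin n → Euc d) (x : Euc d) : ℝ :=
  (kY : ℝ) / (n * Vball d * nnDistY kY Y x ^ d)

/-- The naive nearest-neighbour estimator `T̃_{m,n,kX,kY}`. -/
def Tnaive {d m n : ℕ} (kX kY : ℕ) (φ : ℝ → ℝ → Euc d → ℝ)
    (X : Fin m → Euc d) (Y : Fin n → Euc d) : ℝ :=
  (m : ℝ)⁻¹ * ∑ i : Fin m, φ (fhat kX X i) (ghat kY Y (X i)) (X i)

/-- The weight class `𝒲^{(k)}_{I,c}` (weights `w_1,…,w_k` indexed by `Fin k`). -/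
def Wclass (d k I : ℕ) (c : ℝ) : Set (Fin k → ℝ) :=
  {w | (∑ j, w j) = 1 ∧
    (∀ j : Fin k, ((j : ℕ) : ℝ) + 1 < c * k → w j = 0) ∧
    ∀ l i : ℕ, l ≤ ⌈(d : ℝ) / 2⌉₊ - 1 → i ≤ I → ¬(l = 0 ∧ i = 0) →
      (∑ j : Fin k, (((j : ℕ) : ℝ) + 1) ^ (2 * (l : ℝ) / d - (i : ℝ)) * w j) = 0}

/-- The weighted estimator `T̂_{m,n}^{w_X,w_Y}`. -/
def Twt {d m n : ℕ} (kX kY : ℕ) (wX : Fin kX → ℝ) (wY : Fin kY → ℝ)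
    (φ : ℝ → ℝ → Euc d → ℝ) (X : Fin m → Euc d) (Y : Fin n → Euc d) : ℝ :=
  ∑ jX : Fin kX, ∑ jY : Fin kY,
    wX jX * wY jY * Tnaive ((jX : ℕ) + 1) ((jY : ℕ) + 1) φ X Y

/-- The probability measure on `ℝ^d` with Lebesgue density `f`. -/
def densMeasure {d : ℕ} (f : Euc d → ℝ) : Measure (Euc d) :=
  volume.withDensity fun x => ENNReal.ofReal (f x)

/-- The joint law of the sample `((X_1,…,X_m),(Y_1,…,Y_n))` with `X_i ~ f`, `Y_j ~ g`,
all independent. -/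
def sampleMeasure {d : ℕ} (m n : ℕ) (f g : Euc d → ℝ) :
    Measure ((Fin m → Euc d) × (Fin n → Euc d)) :=
  (Measure.pi fun _ : Fin m => densMeasure f).prod (Measure.pi fun _ : Fin n => densMeasure g)

/-- Variance of `h` under `μ`. -/
def varAgainst {Ω : Type*} [MeasurableSpace Ω] (μ : Measure Ω) (h : Ω → ℝ) : ℝ :=
  ∫ x, (h x - ∫ y, h y ∂μ) ^ 2 ∂μ

/-- The functional `T(f,g) = ∫_𝒳 f φ(f,g,·)`. -/
def Tfunc {d : ℕ} (φ : ℝ → ℝ → Euc d → ℝ) (f g : Euc d → ℝ) : ℝ :=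
  ∫ x in suppXY f g, f x * φ (f x) (g x) x

/-- `v₁(f,g) = Var(φ_{X₁} + (fφ₁₀)_{X₁})`. -/
def v1func {d : ℕ} (φ : ℝ → ℝ → Euc d → ℝ) (f g : Euc d → ℝ) : ℝ :=
  varAgainst (densMeasure f) fun x => φ (f x) (g x) x + f x * phiD φ 1 0 (f x) (g x) x

/-- `v₂(f,g) = Var((fφ₀₁)_{Y₁})`. -/
def v2func {d : ℕ} (φ : ℝ → ℝ → Euc d → ℝ) (f g : Euc d → ℝ) : ℝ :=
  varAgainst (densMeasure g) fun y => f y * phiD φ 0 1 (f y) (g y) y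

/-- `ζ = κ₁/λ₁ + κ₂/λ₂ + d(κ₁+κ₂)/α`. -/
def zetaPar (d : ℕ) (α lam1 lam2 κ1 κ2 : ℝ) : ℝ :=
  κ1 / lam1 + κ2 / lam2 + d * (κ1 + κ2) / α

/-- `τ₁`. -/
def tau1Par (d : ℕ) (α β lam1 lam2 κ1 κ2 b1 : ℝ) : ℝ :=
  1 - max (max ((d : ℝ) / (2 * β)) ((d : ℝ) / (2 * min 2 β + d)))
      (max ((d : ℝ) / (4 * b1)) (1 / (2 * lam1 * (1 - zetaPar d α lam1 lam2 κ1 κ2))))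

/-- `τ₂`. -/
def tau2Par (d : ℕ) (α β lam1 lam2 κ1 κ2 b2 : ℝ) : ℝ :=
  1 - max (max ((d : ℝ) / (2 * β)) ((d : ℝ) / (2 * min 2 β + d)))
      (max ((d : ℝ) / (4 * b2)) (1 / (2 * lam2 * (1 - zetaPar d α lam1 lam2 κ1 κ2))))

/-- `γ_* = (2α+d)(1+2κ₂)/(2α+d−2(α+d)κ₁)`. -/
def gammaStar (d : ℕ) (α κ1 κ2 : ℝ) : ℝ :=
  (2 * α + d) * (1 + 2 * κ2) / (2 * α + d - 2 * (α + d) * κ1)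

/-!
The density `f` varies at the length scale `δ(x) = ‖x‖ (1 - ‖x‖)`, in the sense that
`‖D^n f‖ ≲ f / δ^n` on the punctured unit ball: `‖x‖` has this property by homogeneity, and it is
inherited by `1 - ‖x‖`, by real powers and by products. As `f` and `δ` change by at most a bounded
factor on `B(x, δ(x) / 2)`, this gives `M_{f,β} ≲ 1 / δ`. Hence `f (M_{f,β}^d / f)^λ` is dominated
by the radial Beta profile with exponents `(a - 1)(1 - λ) - dλ` at the centre and
`(b - 1)(1 - λ) - dλ` at the unit sphere. In polar coordinates its integral is a Beta integral, and
`λ < b / (b + d - 1)` says exactly that the exponent at the unit sphere exceeds `-1`.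
-/

lemma iteratedFDeriv_comp_smul_of_ne_zero {𝕜 E F : Type*} [NontriviallyNormedField 𝕜]
    [NormedAddCommGroup E] [NormedSpace 𝕜 E] [NormedAddCommGroup F] [NormedSpace 𝕜 F]
    {c : 𝕜} (hc : c ≠ 0) (f : E → F) (n : ℕ) (x : E) :
    iteratedFDeriv 𝕜 n (fun y => f (c • y)) x = c ^ n • iteratedFDeriv 𝕜 n f (c • x) := by
  let g : E ≃L[𝕜] E := ContinuousLinearEquiv.smulLeft (Units.mk0 c hc)
  have hcomp := g.iteratedFDerivWithin_comp_right f uniqueDiffOn_univ (mem_univ (g x)) n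
  rw [preimage_univ, iteratedFDerivWithin_univ, iteratedFDerivWithin_univ] at hcomp
  refine hcomp.trans ?_
  ext v
  change iteratedFDeriv 𝕜 n f (c • x) (fun i => c • v i) = _
  rw [ContinuousMultilinearMap.map_smul_univ]
  simp

section Homogeneous

variable {E F : Type*} [NormedAddCommGroup E] [NormedSpace ℝ E] [NormedAddCommGroup F]
  [NormedSpace ℝ F]

lemma norm_iteratedFDeriv_of_homogeneous {f : E → F} {k : ℝ} {n : ℕ} {c : ℝ} (hc : 0 < c) {x : E}
    (hf : ContDiffAt ℝ n f x) (hhom : ∀ y, f (c • y) = c ^ k • f y) :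
    c ^ k * ‖iteratedFDeriv ℝ n f x‖ = c ^ n * ‖iteratedFDeriv ℝ n f (c • x)‖ := by
  have h := iteratedFDeriv_comp_smul_of_ne_zero hc.ne' f n x
  simp only [hhom] at h
  rw [iteratedFDeriv_const_smul_apply' hf] at h
  simpa [norm_smul, abs_of_pos hc, abs_of_pos (Real.rpow_pos_of_pos hc k)] using congrArg norm h

lemma exists_norm_iteratedFDeriv_le_of_homogeneous [ProperSpace E] {f : E → F} {k : ℝ} (n : ℕ)
    (hf : ∀ x ≠ 0, ContDiffAt ℝ n f x) (hhom : ∀ c : ℝ, 0 < c → ∀ x, f (c • x) = c ^ k • f x) :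
    ∃ A : ℝ, ∀ x ≠ 0, ‖iteratedFDeriv ℝ n f x‖ ≤ A * (‖x‖ ^ k * ‖x‖⁻¹ ^ n) := by
  have hcont : ContinuousOn (iteratedFDeriv ℝ n f) (Metric.sphere 0 1) := fun x hx =>
    ((hf x (ne_zero_of_mem_unit_sphere ⟨x, hx⟩)).continuousAt_iteratedFDeriv
      le_rfl).continuousWithinAt
  obtain ⟨A, hA⟩ := (isCompact_sphere (0 : E) 1).exists_bound_of_continuousOn hcont
  refine ⟨A, fun x hx => ?_⟩
  have hr : 0 < ‖x‖ := norm_pos_iff.2 hx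
  have hsphere : ‖x‖⁻¹ • x ∈ Metric.sphere (0 : E) 1 := by
    simp [norm_smul, hr.ne']
  have hscale := norm_iteratedFDeriv_of_homogeneous (inv_pos.2 hr) (hf x hx)
    (hhom _ (inv_pos.2 hr))
  rw [Real.inv_rpow hr.le, inv_mul_eq_iff_eq_mul₀ (Real.rpow_pos_of_pos hr k).ne'] at hscale
  calc ‖iteratedFDeriv ℝ n f x‖
      = ‖x‖ ^ k * (‖x‖⁻¹ ^ n * ‖iteratedFDeriv ℝ n f (‖x‖⁻¹ • x)‖) := hscale
    _ ≤ ‖x‖ ^ k * (‖x‖⁻¹ ^ n * A) := by gcongr; exact hA _ hsphere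
    _ = A * (‖x‖ ^ k * ‖x‖⁻¹ ^ n) := by ring

end Homogeneous

section Rpow

variable {E : Type*} [NormedAddCommGroup E] [NormedSpace ℝ E] {f : E → ℝ} {U : Set E} {n : ℕ}
  {x : E} {D : ℝ}

lemma norm_iteratedFDerivWithin_rpow_const_one (q : ℝ) (i : ℕ) :
    ‖iteratedFDerivWithin ℝ i (fun v : ℝ => v ^ q) (Ioi 0) 1‖ = |(descPochhammer ℝ i).eval q| := by
  rw [iteratedFDerivWithin_of_isOpen i isOpen_Ioi (mem_Ioi.2 one_pos),
    norm_iteratedFDeriv_eq_norm_iteratedDeriv, iteratedDeriv_eq_iterate,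
    Real.iter_deriv_rpow_const, Real.one_rpow, mul_one, Real.norm_eq_abs]

lemma norm_iteratedFDeriv_rpow_le_of_eq_one (hU : IsOpen U) (hf : ContDiffOn ℝ n f U)
    (hpos : ∀ y ∈ U, 0 < f y) (q : ℝ) (hx : x ∈ U) (hfx : f x = 1)
    (hD : ∀ i, 1 ≤ i → i ≤ n → ‖iteratedFDeriv ℝ i f x‖ ≤ D ^ i) :
    ‖iteratedFDeriv ℝ n (fun y => f y ^ q) x‖ ≤
      n.factorial * (∑ i ∈ Finset.range (n + 1), |(descPochhammer ℝ i).eval q|) * D ^ n := by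
  have hrpow : ContDiffOn ℝ n (fun v : ℝ => v ^ q) (Ioi 0) := fun v hv =>
    (Real.contDiffAt_rpow_const_of_ne (ne_of_gt hv)).contDiffWithinAt
  rw [← iteratedFDerivWithin_of_isOpen n hU hx]
  refine norm_iteratedFDerivWithin_comp_le hrpow hf le_rfl isOpen_Ioi.uniqueDiffOn
    hU.uniqueDiffOn hpos hx (fun i hi => ?_) (fun i h1 hi => ?_)
  · rw [hfx, norm_iteratedFDerivWithin_rpow_const_one]
    exact Finset.single_le_sum (f := fun i => |(descPochhammer ℝ i).eval q|)
      (fun _ _ => abs_nonneg _) (Finset.mem_range_succ_iff.2 hi)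
  · rw [iteratedFDerivWithin_of_isOpen i hU hx]
    exact hD i h1 hi

lemma norm_iteratedFDeriv_rpow_le (hU : IsOpen U) (hf : ContDiffOn ℝ n f U)
    (hpos : ∀ y ∈ U, 0 < f y) (q : ℝ) (hx : x ∈ U)
    (hD : ∀ i, 1 ≤ i → i ≤ n → ‖iteratedFDeriv ℝ i f x‖ ≤ f x * D ^ i) :
    ‖iteratedFDeriv ℝ n (fun y => f y ^ q) x‖ ≤
      n.factorial * (∑ i ∈ Finset.range (n + 1), |(descPochhammer ℝ i).eval q|) *
        (f x ^ q * D ^ n) := by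
  have hfx := hpos x hx
  have hnhds := hU.mem_nhds hx
  set g : E → ℝ := (f x)⁻¹ • f with hg
  have hgpos : ∀ y ∈ U, 0 < g y := fun y hy => mul_pos (inv_pos.2 hfx) (hpos y hy)
  have hgsmooth : ContDiffOn ℝ n g U := ContDiffOn.const_smul (f x)⁻¹ hf
  have hgq := norm_iteratedFDeriv_rpow_le_of_eq_one (D := D) hU hgsmooth hgpos q hx
    (inv_mul_cancel₀ hfx.ne') fun i h1 hi => by
      rw [hg, iteratedFDeriv_const_smul_apply ((hf.contDiffAt hnhds).of_le (mod_cast hi)),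
        norm_smul, Real.norm_of_nonneg (inv_pos.2 hfx).le, inv_mul_le_iff₀ hfx]
      exact hD i h1 hi
  have hrescale : (fun y => f y ^ q) =ᶠ[𝓝 x] f x ^ q • fun y => g y ^ q := by
    filter_upwards [hnhds] with y hy
    simp only [Pi.smul_apply, smul_eq_mul]
    rw [← Real.mul_rpow hfx.le (hgpos y hy).le]
    simp [hg, hfx.ne']
  have hgqsmooth : ContDiffAt ℝ n (fun y => g y ^ q) x :=
    (hgsmooth.contDiffAt hnhds).rpow_const_of_ne (hgpos x hx).ne'
  rw [(hrescale.iteratedFDeriv ℝ n).eq_of_nhds, iteratedFDeriv_const_smul_apply hgqsmooth,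
    norm_smul, Real.norm_of_nonneg (by positivity)]
  exact (mul_le_mul_of_nonneg_left hgq (by positivity)).trans_eq (by ring)

end Rpow

section DerivScale

variable {E : Type*} [NormedAddCommGroup E] [NormedSpace ℝ E]

/-- `f` is positive and smooth on the open set `U` and varies there at the length scale `δ`: its
`n`-th derivative is at most a constant multiple of `f / δ ^ n`. For such `f` the local smoothness
functional `M_{f,β}` is of order `1 / δ`. -/
structure HasDerivScale (f δ : E → ℝ) (U : Set E) : Prop where
  isOpen : IsOpen U
  pos : ∀ x ∈ U, 0 < f x
  scale_pos : ∀ x ∈ U, 0 < δ x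
  contDiffOn : ∀ n : ℕ, ContDiffOn ℝ n f U
  bound : ∀ n : ℕ, ∃ A : ℝ, ∀ x ∈ U, ‖iteratedFDeriv ℝ n f x‖ ≤ A * (f x * (δ x)⁻¹ ^ n)

namespace HasDerivScale

variable {f g δ : E → ℝ} {U : Set E}

lemma contDiffAt (h : HasDerivScale f δ U) (n : ℕ) {x : E} (hx : x ∈ U) : ContDiffAt ℝ n f x :=
  (h.contDiffOn n).contDiffAt (h.isOpen.mem_nhds hx)

lemma exists_uniform_bound (h : HasDerivScale f δ U) (N : ℕ) :
    ∃ A : ℝ, 1 ≤ A ∧ ∀ n ≤ N, ∀ x ∈ U,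
      ‖iteratedFDeriv ℝ n f x‖ ≤ f x * (A * (δ x)⁻¹) ^ n := by
  choose A hA using h.bound
  set S := ∑ n ∈ Finset.range (N + 1), |A n|
  have hS0 : 0 ≤ S := Finset.sum_nonneg fun _ _ => abs_nonneg _
  refine ⟨1 + S, by linarith, fun n hn x hx => ?_⟩
  have hfx := h.pos x hx
  have hδx := h.scale_pos x hx
  rcases n.eq_zero_or_pos with rfl | hn0
  · simp [abs_of_pos hfx]
  have hAn : A n ≤ (1 + S) ^ n := by
    have hle : |A n| ≤ S := Finset.single_le_sum (f := fun n => |A n|)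
      (fun _ _ => abs_nonneg _) (Finset.mem_range_succ_iff.2 hn)
    calc A n ≤ 1 + S := by linarith [le_abs_self (A n)]
      _ ≤ (1 + S) ^ n := le_self_pow₀ (by linarith) hn0.ne'
  calc ‖iteratedFDeriv ℝ n f x‖ ≤ A n * (f x * (δ x)⁻¹ ^ n) := hA n x hx
    _ ≤ (1 + S) ^ n * (f x * (δ x)⁻¹ ^ n) := by gcongr
    _ = f x * ((1 + S) * (δ x)⁻¹) ^ n := by rw [mul_pow]; ring

lemma mono {δ' : E → ℝ} {V : Set E} (h : HasDerivScale f δ U) (hV : IsOpen V) (hVU : V ⊆ U)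
    (hpos : ∀ x ∈ V, 0 < δ' x) (hle : ∀ x ∈ V, δ' x ≤ δ x) : HasDerivScale f δ' V where
  isOpen := hV
  pos x hx := h.pos x (hVU hx)
  scale_pos := hpos
  contDiffOn n := (h.contDiffOn n).mono hVU
  bound n := by
    obtain ⟨A, hA1, hA⟩ := h.exists_uniform_bound n
    refine ⟨A ^ n, fun x hx => ?_⟩
    have hfx := h.pos x (hVU hx)
    have hδx := h.scale_pos x (hVU hx)
    calc ‖iteratedFDeriv ℝ n f x‖ ≤ f x * (A * (δ x)⁻¹) ^ n := hA n le_rfl x (hVU hx)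
      _ ≤ f x * (A * (δ' x)⁻¹) ^ n := by gcongr; exacts [hpos x hx, hle x hx]
      _ = A ^ n * (f x * (δ' x)⁻¹ ^ n) := by rw [mul_pow]; ring

lemma congr (h : HasDerivScale f δ U) (hfg : EqOn g f U) : HasDerivScale g δ U where
  isOpen := h.isOpen
  pos x hx := (h.pos x hx).trans_eq (hfg hx).symm
  scale_pos := h.scale_pos
  contDiffOn n := (h.contDiffOn n).congr hfg
  bound n := by
    obtain ⟨A, hA⟩ := h.bound n
    refine ⟨A, fun x hx => ?_⟩
    rw [((hfg.eventuallyEq_of_mem (h.isOpen.mem_nhds hx)).iteratedFDeriv ℝ n).eq_of_nhds, hfg hx]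
    exact hA x hx

lemma const_mul (h : HasDerivScale f δ U) {c : ℝ} (hc : 0 < c) :
    HasDerivScale (fun x => c * f x) δ U where
  isOpen := h.isOpen
  pos x hx := mul_pos hc (h.pos x hx)
  scale_pos := h.scale_pos
  contDiffOn n := contDiffOn_const.mul (h.contDiffOn n)
  bound n := by
    obtain ⟨A, hA⟩ := h.bound n
    refine ⟨A, fun x hx => ?_⟩
    have hderiv : iteratedFDeriv ℝ n (fun x => c * f x) x = c • iteratedFDeriv ℝ n f x :=
      iteratedFDeriv_const_smul_apply' (a := c) (h.contDiffAt n hx)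
    rw [hderiv, norm_smul, Real.norm_of_nonneg hc.le]
    exact (mul_le_mul_of_nonneg_left (hA x hx) hc.le).trans_eq (by ring)

lemma mul (hf : HasDerivScale f δ U) (hg : HasDerivScale g δ U) :
    HasDerivScale (fun x => f x * g x) δ U where
  isOpen := hf.isOpen
  pos x hx := mul_pos (hf.pos x hx) (hg.pos x hx)
  scale_pos := hf.scale_pos
  contDiffOn n := (hf.contDiffOn n).mul (hg.contDiffOn n)
  bound n := by
    obtain ⟨A, hA1, hA⟩ := hf.exists_uniform_bound n
    obtain ⟨B, -, hB⟩ := hg.exists_uniform_bound n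
    refine ⟨(A + B) ^ n, fun x hx => ?_⟩
    have hfx := hf.pos x hx
    have hδx := hf.scale_pos x hx
    have hleibniz := norm_iteratedFDerivWithin_mul_le (hf.contDiffOn n) (hg.contDiffOn n)
      hf.isOpen.uniqueDiffOn hx le_rfl
    simp only [iteratedFDerivWithin_of_isOpen _ hf.isOpen hx] at hleibniz
    calc ‖iteratedFDeriv ℝ n (fun y => f y * g y) x‖
        ≤ ∑ i ∈ Finset.range (n + 1), (n.choose i : ℝ) * ‖iteratedFDeriv ℝ i f x‖ *
            ‖iteratedFDeriv ℝ (n - i) g x‖ := hleibniz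
      _ ≤ ∑ i ∈ Finset.range (n + 1), (n.choose i : ℝ) * (f x * (A * (δ x)⁻¹) ^ i) *
            (g x * (B * (δ x)⁻¹) ^ (n - i)) := by
          gcongr with i hi
          exacts [hA i (Finset.mem_range_succ_iff.1 hi) x hx, hB (n - i) (n.sub_le i) x hx]
      _ = f x * g x * (A * (δ x)⁻¹ + B * (δ x)⁻¹) ^ n := by
          rw [add_pow, Finset.mul_sum]
          exact Finset.sum_congr rfl fun i _ => by ring
      _ = (A + B) ^ n * (f x * g x * (δ x)⁻¹ ^ n) := by rw [← add_mul, mul_pow]; ring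

lemma rpow_const (h : HasDerivScale f δ U) (q : ℝ) : HasDerivScale (fun x => f x ^ q) δ U where
  isOpen := h.isOpen
  pos x hx := Real.rpow_pos_of_pos (h.pos x hx) q
  scale_pos := h.scale_pos
  contDiffOn n := (h.contDiffOn n).rpow_const_of_ne fun x hx => (h.pos x hx).ne'
  bound n := by
    obtain ⟨A, -, hA⟩ := h.exists_uniform_bound n
    refine ⟨n.factorial * (∑ i ∈ Finset.range (n + 1), |(descPochhammer ℝ i).eval q|) * A ^ n,
      fun x hx => ?_⟩
    refine (norm_iteratedFDeriv_rpow_le h.isOpen (h.contDiffOn n) h.pos q hx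
      fun i _ hi => hA i hi x hx).trans_eq ?_
    rw [mul_pow]
    ring

lemma one_sub (h : HasDerivScale f δ U) (hf1 : ∀ x ∈ U, f x < 1) :
    HasDerivScale (fun x => 1 - f x) (fun x => δ x * (1 - f x)) U where
  isOpen := h.isOpen
  pos x hx := sub_pos.2 (hf1 x hx)
  scale_pos x hx := mul_pos (h.scale_pos x hx) (sub_pos.2 (hf1 x hx))
  contDiffOn n := contDiffOn_const.sub (h.contDiffOn n)
  bound n := by
    obtain ⟨A, hA1, hA⟩ := h.exists_uniform_bound n
    refine ⟨A ^ n, fun x hx => ?_⟩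
    have hfx := h.pos x hx
    have hδx := h.scale_pos x hx
    have hsx : 0 < 1 - f x := sub_pos.2 (hf1 x hx)
    rcases n with - | n
    · simp [abs_of_pos hsx]
    have hderiv : iteratedFDeriv ℝ (n + 1) (fun x => 1 - f x) x =
        -iteratedFDeriv ℝ (n + 1) f x := by
      rw [fun_iteratedFDeriv_sub_apply contDiffAt_const (h.contDiffAt _ hx),
        iteratedFDeriv_const_of_ne n.succ_ne_zero, Pi.zero_apply, zero_sub]
    have hpow : f x ≤ (1 - f x) * (1 - f x)⁻¹ ^ (n + 1) := by
      rw [pow_succ', mul_inv_cancel_left₀ hsx.ne']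
      exact (hf1 x hx).le.trans (one_le_pow₀ ((one_le_inv₀ hsx).2 (by linarith)))
    rw [hderiv, norm_neg]
    calc ‖iteratedFDeriv ℝ (n + 1) f x‖ ≤ f x * (A * (δ x)⁻¹) ^ (n + 1) := hA _ le_rfl x hx
      _ ≤ ((1 - f x) * (1 - f x)⁻¹ ^ (n + 1)) * (A * (δ x)⁻¹) ^ (n + 1) := by gcongr
      _ = A ^ (n + 1) * ((1 - f x) * (δ x * (1 - f x))⁻¹ ^ (n + 1)) := by
          rw [mul_inv, mul_pow, mul_pow]; ring

end HasDerivScale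

end DerivScale

lemma hasDerivScale_norm (E : Type*) [NormedAddCommGroup E] [InnerProductSpace ℝ E]
    [ProperSpace E] : HasDerivScale (fun x : E => ‖x‖) (fun x => ‖x‖) {0}ᶜ where
  isOpen := isOpen_compl_singleton
  pos _ hx := norm_pos_iff.2 hx
  scale_pos _ hx := norm_pos_iff.2 hx
  contDiffOn _ _ hx := (contDiffAt_norm ℝ hx).contDiffWithinAt
  bound n := by
    obtain ⟨A, hA⟩ := exists_norm_iteratedFDeriv_le_of_homogeneous (E := E) (f := norm) (k := 1) n
      (fun _ hx => contDiffAt_norm ℝ hx) fun c hc x => by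
        rw [norm_smul, Real.norm_of_nonneg hc.le, Real.rpow_one, smul_eq_mul]
    exact ⟨A, fun x hx => by simpa only [Real.rpow_one] using hA x hx⟩

lemma norm_image_sub_le_rpow_of_norm_fderiv_le {E F : Type*} [NormedAddCommGroup E]
    [NormedSpace ℝ E] [NormedAddCommGroup F] [NormedSpace ℝ F] {g : E → F} {s : Set E}
    {C ρ θ : ℝ} {y z : E} (hg : ∀ w ∈ s, DifferentiableAt ℝ g w)
    (hC : ∀ w ∈ s, ‖fderiv ℝ g w‖ ≤ C) (hs : Convex ℝ s) (hy : y ∈ s) (hz : z ∈ s)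
    (hyz : y ≠ z) (hρ : ‖z - y‖ ≤ ρ) (hθ : θ ≤ 1) :
    ‖g z - g y‖ ≤ C * ρ ^ (1 - θ) * ‖z - y‖ ^ θ := by
  have hC0 : 0 ≤ C := (norm_nonneg _).trans (hC y hy)
  have hzy : 0 < ‖z - y‖ := norm_sub_pos_iff.2 hyz.symm
  calc ‖g z - g y‖ ≤ C * ‖z - y‖ := hs.norm_image_sub_le_of_norm_fderiv_le hg hC hy hz
    _ = C * ‖z - y‖ ^ (1 - θ) * ‖z - y‖ ^ θ := by
        rw [mul_assoc, ← Real.rpow_add hzy, sub_add_cancel, Real.rpow_one]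
    _ ≤ C * ρ ^ (1 - θ) * ‖z - y‖ ^ θ := by gcongr

section LocalSmoothness

variable {d : ℕ} {β M : ℝ} {f : Euc d → ℝ} {x : Euc d}

lemma le_lfl_add_one (β : ℝ) : β ≤ lfl β + 1 := by
  have h : ⌈β⌉₊ ≤ lfl β + 1 := le_tsub_add
  exact_mod_cast Nat.ceil_le.1 h

lemma inv_two_mul_sqrt_natCast_mul_le (d : ℕ) (hM : 0 < M) :
    (2 * √d * M)⁻¹ ≤ M⁻¹ / 2 := by
  rcases d.eq_zero_or_pos with rfl | hd
  · simp only [Nat.cast_zero, Real.sqrt_zero, mul_zero, zero_mul, inv_zero]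
    positivity
  have hsqrt : 1 ≤ √(d : ℝ) := Real.one_le_sqrt.2 (mod_cast hd)
  calc (2 * √d * M)⁻¹ ≤ (2 * 1 * M)⁻¹ := by gcongr
    _ = M⁻¹ / 2 := by rw [mul_one, mul_inv_rev, div_eq_mul_inv]

lemma mem_MSet_of_norm_iteratedFDeriv_le (hβ : 0 < β) (hM : 1 ≤ M) (hfx : 0 < f x)
    (hsmooth : ∀ w ∈ Metric.closedBall x (2 * √d * M)⁻¹,
      ContDiffAt ℝ (lfl β + 1 : ℕ) f w)
    (hlow : ∀ t ≤ lfl β, ‖iteratedFDeriv ℝ t f x‖ ≤ f x * M ^ t)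
    (htop : ∀ w ∈ Metric.closedBall x (2 * √d * M)⁻¹,
      ‖iteratedFDeriv ℝ (lfl β + 1) f w‖ ≤ f x * M ^ (lfl β + 1)) :
    M ∈ MSet β f x := by
  have hM0 : 0 < M := by linarith
  refine ⟨hM, hfx, ?_, fun t ht1 ht => ?_, fun y hy z hz hyz => ?_⟩
  · exact (hsmooth x (Metric.mem_closedBall_self (by positivity))).of_le
      (mod_cast Nat.le_succ (lfl β))
  · rw [Real.rpow_inv_le_iff_of_pos (by positivity) hM0.le (mod_cast ht1), Real.rpow_natCast,
      div_le_iff₀' hfx]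
    exact hlow t ht
  have hdist : ‖z - y‖ ≤ M⁻¹ := by
    have hradius := inv_two_mul_sqrt_natCast_mul_le d hM0
    rw [← dist_eq_norm]
    linarith [dist_triangle_right z y x, Metric.mem_closedBall.1 hy, Metric.mem_closedBall.1 hz]
  have hholder : ‖iteratedFDeriv ℝ (lfl β) f z - iteratedFDeriv ℝ (lfl β) f y‖ ≤
      f x * M ^ (lfl β + 1) * M⁻¹ ^ (1 - (β - lfl β)) * ‖z - y‖ ^ (β - lfl β) :=
    norm_image_sub_le_rpow_of_norm_fderiv_le
      (fun w hw => (hsmooth w hw).differentiableAt_iteratedFDeriv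
        (mod_cast Nat.lt_succ_self (lfl β)))
      (fun w hw => norm_fderiv_iteratedFDeriv.trans_le (htop w hw))
      (convex_closedBall _ _) hy hz hyz hdist (by linarith [le_lfl_add_one β])
  have hexponent : M ^ (lfl β + 1) * M⁻¹ ^ (1 - (β - lfl β)) = M ^ β := by
    rw [Real.inv_rpow hM0.le, ← Real.rpow_neg hM0.le, ← Real.rpow_natCast, ← Real.rpow_add hM0]
    congr 1
    push_cast
    ring
  have hzy : 0 < ‖z - y‖ := norm_sub_pos_iff.2 hyz.symm
  rw [Real.rpow_inv_le_iff_of_pos (by positivity) hM0.le hβ, div_le_iff₀ (by positivity)]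
  rw [mul_assoc (f x), hexponent] at hholder
  exact hholder.trans_eq (by ring)

lemma mul_mul_inv_pow_le {A B r s u v : ℝ} {n : ℕ} (hA : 0 ≤ A) (hB : 1 ≤ B) (hr : 0 < r)
    (hs : 0 < s) (hv : 0 ≤ v) (huv : u ≤ B * v) (hsr : s ≤ B * r) (hn : n ≠ 0) :
    u * (A * r⁻¹) ^ n ≤ v * (A * (B * B) * s⁻¹) ^ n := by
  have hinv : r⁻¹ ≤ B * s⁻¹ := by
    rw [← div_eq_mul_inv, le_div_iff₀ hs, inv_mul_le_iff₀ hr, mul_comm]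
    exact hsr
  calc u * (A * r⁻¹) ^ n ≤ B * v * (A * (B * s⁻¹)) ^ n := by gcongr
    _ ≤ B ^ n * v * (A * (B * s⁻¹)) ^ n := by gcongr; exact le_self_pow₀ hB hn
    _ = v * (A * (B * B) * s⁻¹) ^ n := by
        simp only [mul_pow]
        ring

lemma HasDerivScale.exists_forall_mem_MSet {δ : Euc d → ℝ} {U : Set (Euc d)} {B : ℝ}
    (h : HasDerivScale f δ U) (hβ : 0 < β) (hδ : ∀ x ∈ U, δ x ≤ 1) (hB1 : 1 ≤ B)
    (hB : ∀ x ∈ U, ∀ w, ‖w - x‖ ≤ δ x / 2 → w ∈ U ∧ f w ≤ B * f x ∧ δ x ≤ B * δ w) :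
    ∃ K : ℝ, 1 ≤ K ∧ ∀ x ∈ U, K * (δ x)⁻¹ ∈ MSet β f x := by
  obtain ⟨A, hA1, hA⟩ := h.exists_uniform_bound (lfl β + 1)
  have hBB : 1 ≤ B * B := one_le_mul_of_one_le_of_one_le hB1 hB1
  have hK1 : 1 ≤ A * (B * B) := one_le_mul_of_one_le_of_one_le hA1 hBB
  refine ⟨A * (B * B), hK1, fun x hx => ?_⟩
  have hfx := h.pos x hx
  have hδx := h.scale_pos x hx
  have hnear : ∀ w ∈ Metric.closedBall x (2 * √d * (A * (B * B) * (δ x)⁻¹))⁻¹,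
      w ∈ U ∧ f w ≤ B * f x ∧ δ x ≤ B * δ w := fun w hw => hB x hx w <| by
    calc ‖w - x‖ ≤ (2 * √d * (A * (B * B) * (δ x)⁻¹))⁻¹ := mem_closedBall_iff_norm.1 hw
      _ ≤ (A * (B * B) * (δ x)⁻¹)⁻¹ / 2 := inv_two_mul_sqrt_natCast_mul_le d (by positivity)
      _ ≤ (1 * (δ x)⁻¹)⁻¹ / 2 := by gcongr
      _ = δ x / 2 := by rw [one_mul, inv_inv]
  refine mem_MSet_of_norm_iteratedFDeriv_le hβ
    (one_le_mul_of_one_le_of_one_le hK1 ((one_le_inv₀ hδx).2 (hδ x hx))) hfx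
    (fun w hw => h.contDiffAt _ (hnear w hw).1) (fun t ht => ?_) fun w hw => ?_
  · calc ‖iteratedFDeriv ℝ t f x‖ ≤ f x * (A * (δ x)⁻¹) ^ t := hA t (by lia) x hx
      _ ≤ f x * (A * (B * B) * (δ x)⁻¹) ^ t := by
          gcongr
          exact le_mul_of_one_le_right (by positivity) hBB
  · obtain ⟨hwU, hfw, hδw⟩ := hnear w hw
    exact (hA _ le_rfl w hwU).trans (mul_mul_inv_pow_le (by linarith) hB1 (h.scale_pos w hwU) hδx
      hfx.le hfw hδw (lfl β).succ_ne_zero)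

lemma ofReal_mul_Mloc_rpow_le {lam : ℝ} (hM : M ∈ MSet β f x) (hlam : 0 ≤ lam) :
    ENNReal.ofReal (f x) * (Mloc β f x ^ (d : ℝ) / ENNReal.ofReal (f x)) ^ lam ≤
      ENNReal.ofReal (f x ^ (1 - lam) * M ^ (d * lam)) := by
  have hM0 : 0 < M := one_pos.trans_le hM.1
  have hfx : 0 < f x := hM.2.1
  have hle : Mloc β f x ≤ ENNReal.ofReal M := sInf_le ⟨M, hM, rfl⟩
  calc ENNReal.ofReal (f x) * (Mloc β f x ^ (d : ℝ) / ENNReal.ofReal (f x)) ^ lam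
      ≤ ENNReal.ofReal (f x) * (ENNReal.ofReal M ^ (d : ℝ) / ENNReal.ofReal (f x)) ^ lam := by
        gcongr
    _ = ENNReal.ofReal (f x * (M ^ (d : ℝ) / f x) ^ lam) := by
        rw [ENNReal.ofReal_rpow_of_pos hM0, ← ENNReal.ofReal_div_of_pos hfx,
          ENNReal.ofReal_rpow_of_nonneg (by positivity) hlam, ← ENNReal.ofReal_mul hfx.le]
    _ = ENNReal.ofReal (f x ^ (1 - lam) * M ^ (d * lam)) := by
        rw [Real.div_rpow (by positivity) hfx.le, ← Real.rpow_mul hM0.le, Real.rpow_sub hfx,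
          Real.rpow_one]
        congr 1
        ring

end LocalSmoothness

section BetaIntegral

variable {u v : ℝ}

lemma betaPDFReal_nonneg (hu : 0 < u) (hv : 0 < v) (x : ℝ) :
    0 ≤ ProbabilityTheory.betaPDFReal u v x := by
  unfold ProbabilityTheory.betaPDFReal
  split_ifs with hx
  · have hbeta := ProbabilityTheory.beta_pos hu hv
    have hx0 := hx.1
    have hx1 : 0 < 1 - x := sub_pos.2 hx.2
    positivity
  · exact le_rfl

lemma integral_betaPDFReal (hu : 0 < u) (hv : 0 < v) :
    ∫ x, ProbabilityTheory.betaPDFReal u v x = 1 := by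
  rw [integral_eq_lintegral_of_nonneg_ae (ae_of_all _ (betaPDFReal_nonneg hu hv))
    (ProbabilityTheory.measurable_betaPDFReal u v).aestronglyMeasurable]
  exact congrArg ENNReal.toReal (ProbabilityTheory.lintegral_betaPDF_eq_one hu hv)

lemma integrable_betaPDFReal (hu : 0 < u) (hv : 0 < v) :
    Integrable (ProbabilityTheory.betaPDFReal u v) :=
  integrable_of_integral_eq_one (integral_betaPDFReal hu hv)

lemma setIntegral_Ioi_betaPDFReal (hu : 0 < u) (hv : 0 < v) :
    ∫ x in Ioi 0, ProbabilityTheory.betaPDFReal u v x = 1 := by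
  rw [← integral_betaPDFReal hu hv]
  exact setIntegral_eq_integral_of_forall_compl_eq_zero fun x hx =>
    if_neg fun h => hx h.1

end BetaIntegral

section RadialBeta

variable {E : Type*} [NormedAddCommGroup E] {c p q : ℝ} {x : E}

/-- The open unit ball without its centre: the set where `radialBeta` is positive and smooth. -/
def puncturedUnitBall (E : Type*) [NormedAddCommGroup E] : Set E := {x | 0 < ‖x‖ ∧ ‖x‖ < 1}

/-- A smooth substitute for the distance from `x` to the boundary of `puncturedUnitBall E`; it is
the length scale at which `radialBeta` varies. -/
def boundaryScale (x : E) : ℝ := ‖x‖ * (1 - ‖x‖)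

/-- The radial function with Beta profile `c * r ^ p * (1 - r) ^ q`. The exponents are those of the
profile, so the density with parameters `a`, `b` has `p = a - 1` and `q = b - 1`. -/
def radialBeta (c p q : ℝ) (x : E) : ℝ :=
  if ‖x‖ ≤ 1 then c * ‖x‖ ^ p * (1 - ‖x‖) ^ q else 0

lemma isOpen_puncturedUnitBall : IsOpen (puncturedUnitBall E) :=
  (isOpen_lt continuous_const continuous_norm).inter (isOpen_lt continuous_norm continuous_const)

lemma boundaryScale_pos (hx : x ∈ puncturedUnitBall E) : 0 < boundaryScale x :=
  mul_pos hx.1 (sub_pos.2 hx.2)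

lemma boundaryScale_le_norm (x : E) : boundaryScale x ≤ ‖x‖ :=
  mul_le_of_le_one_right (norm_nonneg x) (sub_le_self 1 (norm_nonneg x))

lemma radialBeta_of_norm_le_one (hx : ‖x‖ ≤ 1) :
    radialBeta c p q x = c * ‖x‖ ^ p * (1 - ‖x‖) ^ q := if_pos hx

lemma radialBeta_of_one_lt_norm (hx : 1 < ‖x‖) : radialBeta c p q x = 0 := if_neg hx.not_ge

lemma radialBeta_norm (c p q : ℝ) (x : E) : radialBeta c p q ‖x‖ = radialBeta c p q x := by
  simp only [radialBeta, norm_norm]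

lemma radialBeta_nonneg (hc : 0 ≤ c) (x : E) : 0 ≤ radialBeta c p q x := by
  rcases le_or_gt ‖x‖ 1 with hx | hx
  · rw [radialBeta_of_norm_le_one hx]
    positivity
  · exact (radialBeta_of_one_lt_norm hx).ge

lemma radialBeta_le (hc : 0 ≤ c) (hp : 0 ≤ p) (hq : 0 ≤ q) (x : E) : radialBeta c p q x ≤ c := by
  rcases le_or_gt ‖x‖ 1 with hx | hx
  · have hx1 : 0 ≤ 1 - ‖x‖ := sub_nonneg.2 hx
    rw [radialBeta_of_norm_le_one hx, mul_assoc]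
    exact mul_le_of_le_one_right hc <| mul_le_one₀ (Real.rpow_le_one (norm_nonneg x) hx hp)
      (Real.rpow_nonneg hx1 q) (Real.rpow_le_one hx1 (sub_le_self 1 (norm_nonneg x)) hq)
  · exact (radialBeta_of_one_lt_norm hx).trans_le hc

lemma measurable_radialBeta [MeasurableSpace E] [OpensMeasurableSpace E] (c p q : ℝ) :
    Measurable (radialBeta c p q : E → ℝ) :=
  Measurable.ite (measurableSet_le measurable_norm measurable_const) (by fun_prop)
    measurable_const

lemma ae_mem_puncturedUnitBall [NormedSpace ℝ E] [FiniteDimensional ℝ E] [Nontrivial E]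
    [MeasurableSpace E] [BorelSpace E] (μ : Measure E) [μ.IsAddHaarMeasure] :
    ∀ᵐ x ∂μ, ‖x‖ ≤ 1 → x ∈ puncturedUnitBall E := by
  filter_upwards [measure_eq_zero_iff_ae_notMem.1 (Measure.addHaar_sphere μ 0 0),
    measure_eq_zero_iff_ae_notMem.1 (Measure.addHaar_sphere μ 0 1)] with x hx0 hx1 hx
  rw [mem_sphere_zero_iff_norm] at hx0 hx1
  exact ⟨(norm_nonneg x).lt_of_ne' hx0, hx.lt_of_ne hx1⟩

lemma hasDerivScale_radialBeta {E : Type*} [NormedAddCommGroup E] [InnerProductSpace ℝ E]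
    [ProperSpace E] (hc : 0 < c) (p q : ℝ) :
    HasDerivScale (radialBeta c p q) boundaryScale (puncturedUnitBall E) := by
  have hnorm := (hasDerivScale_norm E).mono isOpen_puncturedUnitBall
    (fun _ hx => norm_pos_iff.1 hx.1) (fun _ hx => hx.1) (fun _ _ => le_rfl)
  have hone_sub := hnorm.one_sub fun _ hx => hx.2
  have hnorm' := hnorm.mono isOpen_puncturedUnitBall Subset.rfl
    (fun _ hx => boundaryScale_pos hx) (fun x _ => boundaryScale_le_norm x)
  exact (((hnorm'.rpow_const p).const_mul hc).mul (hone_sub.rpow_const q)).congr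
    fun _ hx => radialBeta_of_norm_le_one hx.2.le

lemma norm_comparison_of_near (hx : x ∈ puncturedUnitBall E) {w : E}
    (hw : ‖w - x‖ ≤ boundaryScale x / 2) :
    ‖w‖ ∈ Icc (‖x‖ / 2) (2 * ‖x‖) ∧ 1 - ‖w‖ ∈ Icc ((1 - ‖x‖) / 2) (2 * (1 - ‖x‖)) := by
  obtain ⟨hx0, hx1⟩ := hx
  have hdiff := abs_le.1 ((abs_norm_sub_norm_le w x).trans hw)
  unfold boundaryScale at hdiff
  refine ⟨⟨?_, ?_⟩, ?_, ?_⟩ <;> nlinarith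

lemma mem_puncturedUnitBall_of_near (hx : x ∈ puncturedUnitBall E) {w : E}
    (hw : ‖w - x‖ ≤ boundaryScale x / 2) : w ∈ puncturedUnitBall E := by
  obtain ⟨⟨hw0, -⟩, hw1, -⟩ := norm_comparison_of_near hx hw
  exact ⟨(half_pos hx.1).trans_le hw0, by linarith [hx.2]⟩

lemma boundaryScale_le_of_near (hx : x ∈ puncturedUnitBall E) {w : E}
    (hw : ‖w - x‖ ≤ boundaryScale x / 2) : boundaryScale x ≤ 4 * boundaryScale w := by
  obtain ⟨⟨hw0, -⟩, hw1, -⟩ := norm_comparison_of_near hx hw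
  have hx1 : 0 < 1 - ‖x‖ := sub_pos.2 hx.2
  calc boundaryScale x = 4 * (‖x‖ / 2 * ((1 - ‖x‖) / 2)) := by unfold boundaryScale; ring
    _ ≤ 4 * boundaryScale w := by unfold boundaryScale; gcongr

lemma radialBeta_le_of_near (hc : 0 ≤ c) (hp : 0 ≤ p) (hq : 0 ≤ q)
    (hx : x ∈ puncturedUnitBall E) {w : E} (hw : ‖w - x‖ ≤ boundaryScale x / 2) :
    radialBeta c p q w ≤ 2 ^ p * 2 ^ q * radialBeta c p q x := by
  obtain ⟨⟨-, hw0⟩, -, hw1⟩ := norm_comparison_of_near hx hw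
  have hwU := mem_puncturedUnitBall_of_near hx hw
  have hx1 : 0 < 1 - ‖x‖ := sub_pos.2 hx.2
  have hw1' : 0 < 1 - ‖w‖ := sub_pos.2 hwU.2
  rw [radialBeta_of_norm_le_one hwU.2.le, radialBeta_of_norm_le_one hx.2.le]
  calc c * ‖w‖ ^ p * (1 - ‖w‖) ^ q ≤ c * (2 * ‖x‖) ^ p * (2 * (1 - ‖x‖)) ^ q := by gcongr
    _ = 2 ^ p * 2 ^ q * (c * ‖x‖ ^ p * (1 - ‖x‖) ^ q) := by
        rw [Real.mul_rpow two_pos.le hx.1.le, Real.mul_rpow two_pos.le hx1.le]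
        ring

lemma radialBeta_rpow_mul_boundaryScale_rpow (hc : 0 < c) (p q : ℝ) {K : ℝ} (hK : 0 ≤ K)
    (s t : ℝ) (hx : x ∈ puncturedUnitBall E) :
    radialBeta c p q x ^ s * (K * (boundaryScale x)⁻¹) ^ t =
      radialBeta (c ^ s * K ^ t) (p * s - t) (q * s - t) x := by
  have hx0 := hx.1
  have hx1 : 0 < 1 - ‖x‖ := sub_pos.2 hx.2
  rw [radialBeta_of_norm_le_one hx.2.le, radialBeta_of_norm_le_one hx.2.le, boundaryScale,
    Real.mul_rpow (by positivity) (by positivity), Real.mul_rpow hc.le (by positivity),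
    ← Real.rpow_mul hx0.le, ← Real.rpow_mul hx1.le, Real.rpow_sub hx0, Real.rpow_sub hx1,
    Real.mul_rpow hK (by positivity), Real.inv_rpow (by positivity),
    Real.mul_rpow hx0.le hx1.le]
  field_simp

lemma ae_pow_smul_radialBeta_eq {n : ℕ} (hn : 0 < n) (c : ℝ) (hp : 0 < p + n) (hq : 0 < q + 1) :
    (fun r : ℝ => r ^ (n - 1) • radialBeta c p q r) =ᵐ[volume.restrict (Ioi 0)] fun r =>
      c * ProbabilityTheory.beta (p + n) (q + 1) *
        ProbabilityTheory.betaPDFReal (p + n) (q + 1) r := by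
  have hbeta := ProbabilityTheory.beta_pos hp hq
  filter_upwards [ae_restrict_of_ae (Measure.ae_ne volume (1 : ℝ)),
    ae_restrict_mem measurableSet_Ioi] with r hr1 (hr0 : 0 < r)
  have hnorm : ‖r‖ = r := Real.norm_of_nonneg hr0.le
  rcases hr1.lt_or_gt with hr | hr
  · have hpow : r ^ (p + n - 1) = r ^ (n - 1) * r ^ p := by
      rw [← Real.rpow_natCast, ← Real.rpow_add hr0, Nat.cast_pred hn]
      ring_nf
    rw [radialBeta_of_norm_le_one (hnorm.trans_le hr.le), hnorm, smul_eq_mul,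
      ProbabilityTheory.betaPDFReal, if_pos ⟨hr0, hr⟩, hpow, add_sub_cancel_right]
    field_simp
  · rw [radialBeta_of_one_lt_norm (hr.trans_eq hnorm.symm), ProbabilityTheory.betaPDFReal,
      if_neg fun h => hr.not_gt h.2, smul_zero, mul_zero]

section PolarIntegral

variable [NormedSpace ℝ E] [FiniteDimensional ℝ E] [Nontrivial E] [MeasurableSpace E]
  [BorelSpace E] (μ : Measure E) [μ.IsAddHaarMeasure]

lemma integrable_radialBeta (c : ℝ) (hp : 0 < p + Module.finrank ℝ E) (hq : 0 < q + 1) :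
    Integrable (radialBeta c p q) μ := by
  have hpolar := integrable_fun_norm_addHaar μ (f := radialBeta c p q)
  simp only [radialBeta_norm] at hpolar
  exact hpolar.2 <| ((integrable_betaPDFReal hp hq).const_mul _).integrableOn.congr
    (ae_pow_smul_radialBeta_eq Module.finrank_pos c hp hq).symm

lemma integral_radialBeta (c : ℝ) (hp : 0 < p + Module.finrank ℝ E) (hq : 0 < q + 1) :
    ∫ x, radialBeta c p q x ∂μ = Module.finrank ℝ E * μ.real (Metric.ball 0 1) *
      (c * ProbabilityTheory.beta (p + Module.finrank ℝ E) (q + 1)) := by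
  have hpolar := integral_fun_norm_addHaar μ (radialBeta c p q)
  simp only [radialBeta_norm] at hpolar
  rw [hpolar, integral_congr_ae (ae_pow_smul_radialBeta_eq Module.finrank_pos c hp hq),
    integral_const_mul, setIntegral_Ioi_betaPDFReal hp hq, mul_one, nsmul_eq_mul, smul_eq_mul,
    mul_assoc]

end PolarIntegral

end RadialBeta

section SmoothnessClass

variable {d : ℕ}

lemma Vball_pos (d : ℕ) : 0 < Vball d :=
  div_pos (Real.rpow_pos_of_pos Real.pi_pos _) (Real.Gamma_pos_of_pos (by positivity))

lemma volume_real_unitBall (d : ℕ) [NeZero d] :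
    (volume : Measure (Euc d)).real (Metric.ball 0 1) = Vball d := by
  have hexp : √Real.pi ^ d = Real.pi ^ ((d : ℝ) / 2) := by
    rw [Real.sqrt_eq_rpow, ← Real.rpow_natCast, ← Real.rpow_mul Real.pi_pos.le]
    ring_nf
  have hV := (Vball_pos d).le
  unfold Vball at hV ⊢
  rw [Measure.real, EuclideanSpace.volume_ball, ENNReal.ofReal_one, one_pow, one_mul,
    Fintype.card_fin, hexp, add_comm ((d : ℝ) / 2), ENNReal.toReal_ofReal hV]

/-- The normalising constant `C_{d,a,b}` of the radial Beta density. -/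
def betaConst (d : ℕ) (a b : ℝ) : ℝ :=
  Real.Gamma (a + b + d - 1) / (d * Vball d * Real.Gamma (a + d - 1) * Real.Gamma b)

lemma betaConst_pos [NeZero d] {a b : ℝ} (ha : 0 < a) (hb : 0 < b) : 0 < betaConst d a b := by
  have hd : (1 : ℝ) ≤ d := Nat.one_le_cast.2 NeZero.one_le
  have hnum := Real.Gamma_pos_of_pos (by linarith : 0 < a + b + d - 1)
  have hden := Real.Gamma_pos_of_pos (by linarith : 0 < a + d - 1)
  have hV := Vball_pos d
  unfold betaConst
  positivity

lemma isDensity_radialBeta [NeZero d] {a b : ℝ} (ha : 0 < a) (hb : 0 < b) :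
    IsDensity (radialBeta (betaConst d a b) (a - 1) (b - 1) : Euc d → ℝ) := by
  have hd : (1 : ℝ) ≤ d := Nat.one_le_cast.2 NeZero.one_le
  refine ⟨measurable_radialBeta _ _ _, radialBeta_nonneg (betaConst_pos ha hb).le, ?_⟩
  have hden := Real.Gamma_pos_of_pos (by linarith : 0 < a + d - 1)
  have hnum := Real.Gamma_pos_of_pos (by linarith : 0 < a + b + d - 1)
  have hV := Vball_pos d
  rw [integral_radialBeta volume _ (by rw [finrank_euclideanSpace_fin]; linarith) (by linarith),
    finrank_euclideanSpace_fin, volume_real_unitBall, ProbabilityTheory.beta, betaConst,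
    show a - 1 + d = a + d - 1 by ring, sub_add_cancel,
    show a + d - 1 + b = a + b + d - 1 by ring]
  field_simp

lemma exists_forall_mem_MSet_radialBeta {c p q β : ℝ} (hc : 0 < c) (hp : 0 ≤ p) (hq : 0 ≤ q)
    (hβ : 0 < β) : ∃ K : ℝ, 1 ≤ K ∧ ∀ x ∈ puncturedUnitBall (Euc d),
      K * (boundaryScale x)⁻¹ ∈ MSet β (radialBeta c p q) x := by
  refine (hasDerivScale_radialBeta hc p q).exists_forall_mem_MSet (B := max 4 (2 ^ p * 2 ^ q)) hβ
    (fun x hx => (boundaryScale_le_norm x).trans hx.2.le) (le_max_of_le_left (by norm_num))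
    fun x hx w hw => ?_
  have hwU := mem_puncturedUnitBall_of_near hx hw
  refine ⟨hwU, (radialBeta_le_of_near hc.le hp hq hx hw).trans ?_,
    (boundaryScale_le_of_near hx hw).trans ?_⟩
  · exact mul_le_mul_of_nonneg_right (le_max_right _ _) (radialBeta_nonneg hc.le x)
  · exact mul_le_mul_of_nonneg_right (le_max_left _ _) (boundaryScale_pos hwU).le

lemma lintegral_Mloc_radialBeta_lt_top [NeZero d] {c p q β lam : ℝ} (hc : 0 < c) (hp : 0 ≤ p)
    (hq : 0 ≤ q) (hβ : 0 < β) (hlam : 0 ≤ lam) (hlam' : lam * (q + d) < q + 1) :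
    ∫⁻ x : Euc d in {x | 0 < radialBeta c p q x}, ENNReal.ofReal (radialBeta c p q x) *
      (Mloc β (radialBeta c p q) x ^ (d : ℝ) / ENNReal.ofReal (radialBeta c p q x)) ^ lam
      < ⊤ := by
  have hd : (1 : ℝ) ≤ d := Nat.one_le_cast.2 NeZero.one_le
  have hlam1 : lam < 1 := by nlinarith
  obtain ⟨K, hK1, hK⟩ := exists_forall_mem_MSet_radialBeta (d := d) hc hp hq hβ
  set g : Euc d → ℝ := radialBeta (c ^ (1 - lam) * K ^ (d * lam)) (p * (1 - lam) - d * lam)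
    (q * (1 - lam) - d * lam)
  have hint : Integrable g := by
    refine integrable_radialBeta volume _ ?_ (by linarith)
    rw [finrank_euclideanSpace_fin]
    have hprod : 0 < (p + d) * (1 - lam) := mul_pos (by linarith) (sub_pos.2 hlam1)
    linarith
  refine lt_of_le_of_lt ?_ hint.lintegral_lt_top
  refine (setLIntegral_mono_ae' (measurableSet_lt measurable_const (measurable_radialBeta c p q))
    ?_).trans (setLIntegral_le_lintegral _ _)
  filter_upwards [ae_mem_puncturedUnitBall (volume : Measure (Euc d))] with x hx hpos
  have hxU := hx (not_lt.1 fun hx1 => hpos.ne' (radialBeta_of_one_lt_norm hx1))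
  refine (ofReal_mul_Mloc_rpow_le (hK x hxU) hlam).trans_eq ?_
  rw [radialBeta_rpow_mul_boundaryScale_rpow hc p q (by linarith) _ _ hxU]

lemma lintegral_norm_rpow_mul_lt_top {f : Euc d → ℝ} {α : ℝ} (hf : Integrable f)
    (hnonneg : ∀ x, 0 ≤ f x) (hsupp : ∀ x, 1 < ‖x‖ → f x = 0) (hα : 0 ≤ α) :
    ∫⁻ x, ENNReal.ofReal (‖x‖ ^ α * f x) < ⊤ := by
  refine lt_of_le_of_lt (lintegral_mono fun x => ENNReal.ofReal_le_ofReal ?_) hf.lintegral_lt_top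
  rcases le_or_gt ‖x‖ 1 with hx | hx
  · exact mul_le_of_le_one_left (hnonneg x) (Real.rpow_le_one (norm_nonneg x) hx hα)
  · rw [hsupp x hx, mul_zero]

lemma eventually_mem_Gclass {f : Euc d → ℝ} {α β lam B : ℝ} (hf : IsDensity f)
    (hmoment : ∫⁻ x, ENNReal.ofReal (‖x‖ ^ α * f x) < ⊤) (hbound : ∀ x, f x ≤ B)
    (hsmooth : ∫⁻ x in {x | 0 < f x},
      ENNReal.ofReal (f x) * (Mloc β f x ^ (d : ℝ) / ENNReal.ofReal (f x)) ^ lam < ⊤) :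
    ∀ᶠ C in atTop, f ∈ Gclass d α β lam C := by
  filter_upwards [ENNReal.tendsto_ofReal_atTop.eventually_const_le hmoment,
    eventually_ge_atTop B, ENNReal.tendsto_ofReal_atTop.eventually_const_le hsmooth]
    with C hmomentC hB hsmoothC
  exact ⟨hf, hmomentC, fun x => (hbound x).trans hB, hsmoothC⟩

end SmoothnessClass

/-- Proposition: the radially symmetric Beta-type density belongs to the classes
`𝒢_{d,(α,β,λ,C)}` for all sufficiently large `C`. -/
theorem beta_density_mem_Gclass
    (d : ℕ) (hd : 0 < d) (a b : ℝ) (ha : 1 ≤ a) (hb : 1 ≤ b)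
    (α β lam : ℝ) (hα : 0 < α) (hβ : 0 < β)
    (hlam : 0 < lam) (hlam' : lam < b / (b + d - 1)) :
    ∃ C0 > (0 : ℝ), ∀ C : ℝ, C0 ≤ C →
      (fun x : Euc d =>
          if ‖x‖ ≤ 1 then
            Real.Gamma (a + b + d - 1) /
                (d * Vball d * Real.Gamma (a + d - 1) * Real.Gamma b) *
              ‖x‖ ^ (a - 1) * (1 - ‖x‖) ^ (b - 1)
          else 0) ∈ Gclass d α β lam C := by
  change ∃ C0 > (0 : ℝ), ∀ C : ℝ, C0 ≤ C →
    radialBeta (betaConst d a b) (a - 1) (b - 1) ∈ Gclass d α β lam C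
  have : NeZero d := ⟨hd.ne'⟩
  have hd1 : (1 : ℝ) ≤ d := mod_cast hd
  have hc : 0 < betaConst d a b := betaConst_pos (by linarith) (by linarith)
  have hcond : lam * (b - 1 + d) < b - 1 + 1 := by
    linarith [(lt_div_iff₀ (by linarith : 0 < b + d - 1)).1 hlam']
  have hdensity : IsDensity (radialBeta (betaConst d a b) (a - 1) (b - 1) : Euc d → ℝ) :=
    isDensity_radialBeta (by linarith) (by linarith)
  obtain ⟨C0, hC0⟩ := eventually_atTop.1 <| eventually_mem_Gclass hdensity
    (lintegral_norm_rpow_mul_lt_top (integrable_of_integral_eq_one hdensity.2.2) hdensity.2.1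
      (fun _ => radialBeta_of_one_lt_norm) hα.le)
    (radialBeta_le hc.le (sub_nonneg.2 ha) (sub_nonneg.2 hb))
    (lintegral_Mloc_radialBeta_lt_top hc (sub_nonneg.2 ha) (sub_nonneg.2 hb) hβ hlam.le hcond)
  exact ⟨max 1 C0, lt_max_of_lt_left one_pos, fun C hC => hC0 C (le_of_max_le_right hC)⟩

end
end

section
/- Suppose b > a > 0 and let B ~ Beta(a, b−a). Writing h(t) := t − log(1+t), we have, for all u ∈ [0,∞): P(|B − a/b| ≥ a^{1/2} u / b) ≤ 2 exp( −a h( a^{−1/2} b^{1/2} u / (b^{1/2} + a^{1/2} + u) ) ) + 2 exp( −b h( u / (b^{1/2} + a^{1/2} + u) ) ). -/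
open MeasureTheory Filter Set
open scoped ENNReal NNReal BigOperators Topology

noncomputable section

/-- `h(t) = t - log(1+t)`. -/
def hexp (t : ℝ) : ℝ := t - Real.log (1 + t)

/-!
Multiplying the odds `s / (1 - s)` by `r > 0` is a bijection of `(0, 1)` under which the
`Beta(α, β)` density changes by the factor `r ^ α * (r * s + (1 - s)) ^ (-(α + β))`. Hence
`E[(r B + (1 - B)) ^ (-(α + β))] = r ^ (-α)`, and `r s + (1 - s) ≤ exp (-(1 - r) s)` turns this
into `E[exp ((α + β) (1 - r) B)] ≤ r ^ (-α)`: the moment generating function of `B` is at most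
that of a `Gamma(α, α + β)` variable. Chernoff's bound at `r = 1 / (1 + δ)` gives the rate `α h(δ)`
for a relative deviation `δ > -1` from the mean; since `h(δ) ≤ h(-δ)`, both tails are at most
`exp (-α h(δ))`. Here `δ = u / √a`, and `h` is increasing on `[0, ∞)`, so the first exponential of
the bound alone suffices.
-/

section RateFunction

lemma hexp_monotoneOn : MonotoneOn hexp (Ici 0) := by
  intro x (hx : 0 ≤ x) y (hy : 0 ≤ y) hxy
  have hlog : Real.log (1 + y) - Real.log (1 + x) ≤ y - x :=
    calc Real.log (1 + y) - Real.log (1 + x) = Real.log ((1 + y) / (1 + x)) :=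
          (Real.log_div (by positivity) (by positivity)).symm
      _ ≤ (1 + y) / (1 + x) - 1 := Real.log_le_sub_one_of_pos (by positivity)
      _ = (y - x) / (1 + x) := by field_simp; ring
      _ ≤ y - x := div_le_self (sub_nonneg.2 hxy) (by linarith)
  simp only [hexp]
  linarith

lemma hexp_le_hexp_neg {x : ℝ} (hx0 : 0 ≤ x) (hx1 : x < 1) : hexp x ≤ hexp (-x) := by
  have h1 : 0 < 1 - x := sub_pos.2 hx1
  have hlog : 2 * x ≤ Real.log (1 + x) - Real.log (1 - x) :=
    calc 2 * x = 2 * (2 * x / (1 - x)) / (2 * x / (1 - x) + 2) := by field_simp; ring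
      _ ≤ Real.log (1 + 2 * x / (1 - x)) := Real.le_log_one_add_of_nonneg (by positivity)
      _ = Real.log ((1 + x) / (1 - x)) := by congr 1; field_simp; ring
      _ = Real.log (1 + x) - Real.log (1 - x) := Real.log_div (by positivity) h1.ne'
  simp only [hexp, ← sub_eq_add_neg]
  linarith

end RateFunction

section OddsScale

/-- The map of `(0, 1)` that multiplies the odds `s / (1 - s)` by `r`; it is the change of
variables behind the moment identity for the Beta distribution. -/
def oddsScale (r s : ℝ) : ℝ := r * s / (r * s + (1 - s))

variable {r s : ℝ}

lemma oddsScale_denom_pos (hr : 0 < r) (hs : s ∈ Ioo 0 1) : 0 < r * s + (1 - s) :=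
  add_pos (mul_pos hr hs.1) (sub_pos.2 hs.2)

lemma one_sub_oddsScale (hr : 0 < r) (hs : s ∈ Ioo 0 1) :
    1 - oddsScale r s = (1 - s) / (r * s + (1 - s)) := by
  rw [oddsScale, one_sub_div (oddsScale_denom_pos hr hs).ne', add_sub_cancel_left]

lemma oddsScale_mapsTo (hr : 0 < r) : MapsTo (oddsScale r) (Ioo 0 1) (Ioo 0 1) := by
  intro s hs
  have hd := oddsScale_denom_pos hr hs
  refine ⟨div_pos (mul_pos hr hs.1) hd, sub_pos.1 ?_⟩
  rw [one_sub_oddsScale hr hs]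
  exact div_pos (sub_pos.2 hs.2) hd

lemma oddsScale_leftInvOn (hr : 0 < r) :
    LeftInvOn (oddsScale r⁻¹) (oddsScale r) (Ioo 0 1) := by
  intro s hs
  have hd := (oddsScale_denom_pos hr hs).ne'
  rw [oddsScale, one_sub_oddsScale hr hs, oddsScale]
  field_simp
  ring

lemma oddsScale_bijOn (hr : 0 < r) : BijOn (oddsScale r) (Ioo 0 1) (Ioo 0 1) := by
  have hinv : InvOn (oddsScale r⁻¹) (oddsScale r) (Ioo 0 1) (Ioo 0 1) :=
    ⟨oddsScale_leftInvOn hr, by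
      simpa only [RightInvOn, inv_inv] using oddsScale_leftInvOn (inv_pos.2 hr)⟩
  exact hinv.bijOn (oddsScale_mapsTo hr) (oddsScale_mapsTo (inv_pos.2 hr))

lemma hasDerivAt_oddsScale (hr : 0 < r) (hs : s ∈ Ioo 0 1) :
    HasDerivAt (oddsScale r) (r / (r * s + (1 - s)) ^ 2) s := by
  have hnum : HasDerivAt (fun x : ℝ => r * x) r s := by
    simpa using (hasDerivAt_id s).const_mul r
  have hden : HasDerivAt (fun x : ℝ => r * x + (1 - x)) (r + -1) s :=
    hnum.add ((hasDerivAt_id s).const_sub 1)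
  refine (hnum.div hden (oddsScale_denom_pos hr hs).ne').congr_deriv ?_
  congr 1
  ring

end OddsScale

section BetaMeasure

open ProbabilityTheory

variable {α β r : ℝ}

lemma betaPDFReal_of_mem_Ioo {s : ℝ} (hs : s ∈ Ioo 0 1) :
    betaPDFReal α β s = s ^ (α - 1) * (1 - s) ^ (β - 1) / beta α β := by
  rw [betaPDFReal, if_pos (show 0 < s ∧ s < 1 from hs)]
  ring

lemma ae_betaMeasure_mem_Ioo : ∀ᵐ s ∂betaMeasure α β, s ∈ Ioo (0 : ℝ) 1 := by
  refine (ae_withDensity_iff (measurable_betaPDFReal α β).ennreal_ofReal).2 (.of_forall ?_)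
  intro s hs
  by_contra hmem
  have hzero : betaPDF α β s = 0 := by
    rw [betaPDF_eq, if_neg (show ¬(0 < s ∧ s < 1) from hmem), ENNReal.ofReal_zero]
  exact hs hzero

lemma lintegral_betaMeasure {f : ℝ → ℝ≥0∞} (hf : Measurable f) :
    ∫⁻ s, f s ∂betaMeasure α β = ∫⁻ s in Ioo 0 1, betaPDF α β s * f s := by
  rw [← Measure.restrict_eq_self_of_ae_mem ae_betaMeasure_mem_Ioo, betaMeasure]
  exact setLIntegral_withDensity_eq_setLIntegral_mul _
    (measurable_betaPDFReal α β).ennreal_ofReal hf measurableSet_Ioo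

lemma betaMeasure_real_eq_setIntegral_div_beta (hα : 0 < α) (hβ : 0 < β) {E : Set ℝ}
    (hE : MeasurableSet E) (hE01 : E ⊆ Ioo 0 1) :
    (betaMeasure α β).real E =
      (∫ s in E, s ^ (α - 1) * (1 - s) ^ (β - 1)) / beta α β := by
  have hnonneg : 0 ≤ᵐ[volume.restrict E] betaPDFReal α β :=
    ae_restrict_of_forall_mem hE fun s hs =>
      (betaPDFReal_pos (hE01 hs).1 (hE01 hs).2 hα hβ).le
  calc (betaMeasure α β).real E = (∫⁻ s in E, betaPDF α β s).toReal := by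
        rw [measureReal_def, betaMeasure, withDensity_apply _ hE]
    _ = ∫ s in E, betaPDFReal α β s :=
        (integral_eq_lintegral_of_nonneg_ae hnonneg
          (stronglyMeasurable_betaPDFReal α β).aestronglyMeasurable).symm
    _ = ∫ s in E, s ^ (α - 1) * (1 - s) ^ (β - 1) / beta α β :=
        setIntegral_congr_fun hE fun _ hs => betaPDFReal_of_mem_Ioo (hE01 hs)
    _ = (∫ s in E, s ^ (α - 1) * (1 - s) ^ (β - 1)) / beta α β := integral_div _ _

lemma setIntegral_Ioo_eq_beta (hα : 0 < α) (hβ : 0 < β) :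
    ∫ s in Ioo (0 : ℝ) 1, s ^ (α - 1) * (1 - s) ^ (β - 1) = beta α β := by
  have := isProbabilityMeasureBeta hα hβ
  have hone : (betaMeasure α β).real (Ioo 0 1) = 1 := by
    rw [measureReal_def, (mem_ae_iff_prob_eq_one measurableSet_Ioo).1 ae_betaMeasure_mem_Ioo,
      ENNReal.toReal_one]
  rw [betaMeasure_real_eq_setIntegral_div_beta hα hβ measurableSet_Ioo Subset.rfl] at hone
  exact (div_eq_one_iff_eq (beta_pos hα hβ).ne').1 hone

lemma betaPDFReal_mul_rpow_eq_betaPDFReal_oddsScale (hr : 0 < r) {s : ℝ} (hs : s ∈ Ioo 0 1) :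
    betaPDFReal α β s * (r * s + (1 - s)) ^ (-(α + β)) =
      r ^ (-α) * (r / (r * s + (1 - s)) ^ 2 * betaPDFReal α β (oddsScale r s)) := by
  have hd := oddsScale_denom_pos hr hs
  have hs1 : 0 < 1 - s := sub_pos.2 hs.2
  rw [betaPDFReal_of_mem_Ioo hs, betaPDFReal_of_mem_Ioo (oddsScale_mapsTo hr hs),
    one_sub_oddsScale hr hs, oddsScale, Real.div_rpow (mul_pos hr hs.1).le hd.le,
    Real.div_rpow hs1.le hd.le, Real.mul_rpow hr.le hs.1.le, Real.rpow_neg hd.le,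
    Real.rpow_neg hr.le, Real.rpow_add hd, Real.rpow_sub_one hr.ne', Real.rpow_sub_one hd.ne',
    Real.rpow_sub_one hd.ne']
  generalize r * s + (1 - s) = d at hd ⊢
  field_simp

lemma lintegral_rpow_neg_add_betaMeasure (hα : 0 < α) (hβ : 0 < β) (hr : 0 < r) :
    ∫⁻ s, ENNReal.ofReal ((r * s + (1 - s)) ^ (-(α + β))) ∂betaMeasure α β =
      ENNReal.ofReal (r ^ (-α)) := by
  have := isProbabilityMeasureBeta hα hβ
  have hpdf : ∫⁻ s in Ioo 0 1, betaPDF α β s = 1 := by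
    simpa using (lintegral_betaMeasure (α := α) (β := β) measurable_one).symm
  have hsubst : ∫⁻ s in Ioo 0 1, betaPDF α β s =
      ∫⁻ s in Ioo 0 1, ENNReal.ofReal |r / (r * s + (1 - s)) ^ 2| *
        betaPDF α β (oddsScale r s) := by
    conv_lhs => rw [← (oddsScale_bijOn hr).image_eq]
    exact lintegral_image_eq_lintegral_abs_deriv_mul measurableSet_Ioo
      (fun s hs => (hasDerivAt_oddsScale hr hs).hasDerivWithinAt) (oddsScale_bijOn hr).injOn _
  have hdensity : ∀ s ∈ Ioo (0 : ℝ) 1,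
      betaPDF α β s * ENNReal.ofReal ((r * s + (1 - s)) ^ (-(α + β))) =
        ENNReal.ofReal (r ^ (-α)) *
          (ENNReal.ofReal |r / (r * s + (1 - s)) ^ 2| * betaPDF α β (oddsScale r s)) := by
    intro s hs
    have hd := oddsScale_denom_pos hr hs
    have hjacobian : 0 < r / (r * s + (1 - s)) ^ 2 := by positivity
    rw [abs_of_pos hjacobian, betaPDF, betaPDF, ← ENNReal.ofReal_mul hjacobian.le,
      ← ENNReal.ofReal_mul (Real.rpow_nonneg hr.le _),
      ← ENNReal.ofReal_mul' (Real.rpow_nonneg hd.le _),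
      betaPDFReal_mul_rpow_eq_betaPDFReal_oddsScale hr hs]
  rw [lintegral_betaMeasure (by fun_prop), setLIntegral_congr_fun measurableSet_Ioo hdensity,
    lintegral_const_mul' _ _ ENNReal.ofReal_ne_top, ← hsubst, hpdf, mul_one]

lemma mgf_betaMeasure_le (hα : 0 < α) (hβ : 0 < β) (hr : 0 < r) :
    mgf id (betaMeasure α β) ((α + β) * (1 - r)) ≤ r ^ (-α) := by
  have hexp_le : ∀ s ∈ Ioo (0 : ℝ) 1,
      Real.exp ((α + β) * (1 - r) * s) ≤ (r * s + (1 - s)) ^ (-(α + β)) := by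
    intro s hs
    have hd := oddsScale_denom_pos hr hs
    have hlog := Real.log_le_sub_one_of_pos hd
    rw [Real.rpow_def_of_pos hd, Real.exp_le_exp]
    calc (α + β) * (1 - r) * s = -((α + β) * (r * s + (1 - s) - 1)) := by ring
      _ ≤ -((α + β) * Real.log (r * s + (1 - s))) := by gcongr
      _ = Real.log (r * s + (1 - s)) * -(α + β) := by ring
  calc mgf id (betaMeasure α β) ((α + β) * (1 - r))
      = (∫⁻ s, ENNReal.ofReal (Real.exp ((α + β) * (1 - r) * s)) ∂betaMeasure α β).toReal :=
        integral_eq_lintegral_of_nonneg_ae (.of_forall fun _ => (Real.exp_pos _).le)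
          (by fun_prop)
    _ ≤ r ^ (-α) := by
        refine ENNReal.toReal_le_of_le_ofReal (by positivity) ?_
        rw [← lintegral_rpow_neg_add_betaMeasure hα hβ hr]
        exact lintegral_mono_ae <| ae_betaMeasure_mem_Ioo.mono fun s hs =>
          ENNReal.ofReal_le_ofReal (hexp_le s hs)

lemma integrable_exp_mul_betaMeasure (hα : 0 < α) (hβ : 0 < β) (t : ℝ) :
    Integrable (fun s => Real.exp (t * id s)) (betaMeasure α β) := by
  have := isProbabilityMeasureBeta hα hβ
  exact integrable_exp_mul_of_mem_Icc aemeasurable_id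
    (ae_betaMeasure_mem_Ioo.mono fun _ hs => Ioo_subset_Icc_self hs)

variable {δ : ℝ}

lemma exp_mul_mgf_betaMeasure_le (hα : 0 < α) (hβ : 0 < β) (hδ : -1 < δ) :
    Real.exp (-((α + β) * (1 - (1 + δ)⁻¹)) * (α / (α + β) * (1 + δ))) *
        mgf id (betaMeasure α β) ((α + β) * (1 - (1 + δ)⁻¹)) ≤
      Real.exp (-(α * hexp δ)) := by
  have hδ' : 0 < 1 + δ := by linarith
  calc _ ≤ Real.exp (-(α * δ)) * (1 + δ)⁻¹ ^ (-α) := by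
        refine mul_le_mul (Real.exp_le_exp.2 (le_of_eq ?_))
          (mgf_betaMeasure_le hα hβ (inv_pos.2 hδ')) mgf_nonneg (Real.exp_pos _).le
        field_simp
        ring
    _ = Real.exp (-(α * hexp δ)) := by
        rw [Real.rpow_def_of_pos (inv_pos.2 hδ'), Real.log_inv, ← Real.exp_add, hexp]
        ring_nf

lemma betaMeasure_real_upper_tail_le (hα : 0 < α) (hβ : 0 < β) (hδ : 0 ≤ δ) :
    (betaMeasure α β).real {s | α / (α + β) * (1 + δ) ≤ s} ≤ Real.exp (-(α * hexp δ)) := by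
  have := isProbabilityMeasureBeta hα hβ
  have ht : 0 ≤ (α + β) * (1 - (1 + δ)⁻¹) :=
    mul_nonneg (by positivity) (sub_nonneg.2 (inv_le_one_of_one_le₀ (by linarith)))
  exact (measure_ge_le_exp_mul_mgf _ ht (integrable_exp_mul_betaMeasure hα hβ _)).trans
    (exp_mul_mgf_betaMeasure_le hα hβ (by linarith))

lemma betaMeasure_real_lower_tail_le_of_lt_one (hα : 0 < α) (hβ : 0 < β) (hδ0 : 0 ≤ δ)
    (hδ1 : δ < 1) :
    (betaMeasure α β).real {s | s ≤ α / (α + β) * (1 - δ)} ≤ Real.exp (-(α * hexp (-δ))) := by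
  have := isProbabilityMeasureBeta hα hβ
  have ht : (α + β) * (1 - (1 + -δ)⁻¹) ≤ 0 :=
    mul_nonpos_of_nonneg_of_nonpos (by positivity)
      (sub_nonpos.2 ((one_le_inv₀ (by linarith)).2 (by linarith)))
  rw [sub_eq_add_neg]
  exact (measure_le_le_exp_mul_mgf _ ht (integrable_exp_mul_betaMeasure hα hβ _)).trans
    (exp_mul_mgf_betaMeasure_le hα hβ (by linarith))

lemma betaMeasure_real_lower_tail_le (hα : 0 < α) (hβ : 0 < β) (hδ : 0 ≤ δ) :
    (betaMeasure α β).real {s | s ≤ α / (α + β) * (1 - δ)} ≤ Real.exp (-(α * hexp δ)) := by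
  rcases lt_or_ge δ 1 with hδ1 | hδ1
  · refine (betaMeasure_real_lower_tail_le_of_lt_one hα hβ hδ hδ1).trans ?_
    gcongr
    exact hexp_le_hexp_neg hδ hδ1
  · have hnull : betaMeasure α β {s | s ≤ α / (α + β) * (1 - δ)} = 0 := by
      refine measure_mono_null ?_ (ae_iff.1 ae_betaMeasure_mem_Ioo)
      intro s hs hs01
      have hle : α / (α + β) * (1 - δ) ≤ 0 :=
        mul_nonpos_of_nonneg_of_nonpos (by positivity) (by linarith)
      exact (hs01.1.trans_le (hs.trans hle)).false
    rw [measureReal_def, hnull, ENNReal.toReal_zero]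
    exact (Real.exp_pos _).le

lemma betaMeasure_real_two_sided_tail_le (hα : 0 < α) (hβ : 0 < β) (hδ : 0 ≤ δ) :
    (betaMeasure α β).real {s | α / (α + β) * δ ≤ |s - α / (α + β)|} ≤
      2 * Real.exp (-(α * hexp δ)) := by
  have := isProbabilityMeasureBeta hα hβ
  have hsubset : {s | α / (α + β) * δ ≤ |s - α / (α + β)|} ⊆
      {s | α / (α + β) * (1 + δ) ≤ s} ∪ {s | s ≤ α / (α + β) * (1 - δ)} := by
    intro s hs
    rcases le_abs.1 (show α / (α + β) * δ ≤ |s - α / (α + β)| from hs) with h | h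
    · exact .inl (show α / (α + β) * (1 + δ) ≤ s by linarith)
    · exact .inr (show s ≤ α / (α + β) * (1 - δ) by linarith)
  calc _ ≤ (betaMeasure α β).real
          ({s | α / (α + β) * (1 + δ) ≤ s} ∪ {s | s ≤ α / (α + β) * (1 - δ)}) :=
        measureReal_mono hsubset
    _ ≤ (betaMeasure α β).real {s | α / (α + β) * (1 + δ) ≤ s} +
          (betaMeasure α β).real {s | s ≤ α / (α + β) * (1 - δ)} :=
        measureReal_union_le _ _
    _ ≤ Real.exp (-(α * hexp δ)) + Real.exp (-(α * hexp δ)) :=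
        add_le_add (betaMeasure_real_upper_tail_le hα hβ hδ)
          (betaMeasure_real_lower_tail_le hα hβ hδ)
    _ = 2 * Real.exp (-(α * hexp δ)) := (two_mul _).symm

end BetaMeasure

lemma mul_div_mul_add_add_le_div {p q u : ℝ} (hp : 0 < p) (hq : 0 ≤ q) (hu : 0 ≤ u) :
    q * u / (p * (q + p + u)) ≤ u / p := by
  calc q * u / (p * (q + p + u)) = q / (q + p + u) * (u / p) := by field_simp
    _ ≤ 1 * (u / p) := by
      gcongr
      exact div_le_one_of_le₀ (by linarith) (by positivity)
    _ = u / p := one_mul _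

theorem beta_tail_bound_general
    (a b : ℝ) (ha : 0 < a) (hab : a < b) (u : ℝ) (hu : 0 ≤ u) :
    (∫ s in {s : ℝ | s ∈ Ioo (0 : ℝ) 1 ∧ √a * u / b ≤ |s - a / b|},
        s ^ (a - 1) * (1 - s) ^ (b - a - 1)) /
      (∫ s in Ioo (0 : ℝ) 1, s ^ (a - 1) * (1 - s) ^ (b - a - 1)) ≤
    2 * Real.exp (-(a * hexp (u / √a))) := by
  have hba : 0 < b - a := sub_pos.2 hab
  have := ProbabilityTheory.isProbabilityMeasureBeta ha hba
  have hdev : √a * u / b = a / b * (u / √a) := by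
    nth_rw 2 [← Real.mul_self_sqrt ha.le]
    field_simp
  have htail := betaMeasure_real_two_sided_tail_le ha hba (div_nonneg hu (Real.sqrt_nonneg a))
  rw [add_sub_cancel, ← hdev] at htail
  have hmeas : MeasurableSet {s | s ∈ Ioo (0 : ℝ) 1 ∧ √a * u / b ≤ |s - a / b|} :=
    measurableSet_Ioo.inter <|
      measurableSet_le measurable_const (measurable_id.sub_const (a / b)).abs
  rw [setIntegral_Ioo_eq_beta ha hba,
    ← betaMeasure_real_eq_setIntegral_div_beta ha hba hmeas fun _ hs => hs.1]
  exact (measureReal_mono fun _ hs => hs.2).trans htail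

/-- Lemma: a two-sided tail bound for the `Beta(a, b-a)` distribution, expressed via
the integral of the Beta density. -/
theorem beta_tail_bound
    (a b : ℝ) (ha : 0 < a) (hab : a < b) (u : ℝ) (hu : 0 ≤ u) :
    (∫ s in {s : ℝ | s ∈ Set.Ioo (0 : ℝ) 1 ∧ Real.sqrt a * u / b ≤ |s - a / b|},
        s ^ (a - 1) * (1 - s) ^ (b - a - 1)) /
      (∫ s in Set.Ioo (0 : ℝ) 1, s ^ (a - 1) * (1 - s) ^ (b - a - 1)) ≤
    2 * Real.exp (-(a * hexp
        (Real.sqrt b * u / (Real.sqrt a * (Real.sqrt b + Real.sqrt a + u))))) +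
      2 * Real.exp (-(b * hexp (u / (Real.sqrt b + Real.sqrt a + u)))) := by
  have hmono : hexp (√b * u / (√a * (√b + √a + u))) ≤ hexp (u / √a) :=
    hexp_monotoneOn (by simp only [mem_Ici]; positivity) (by simp only [mem_Ici]; positivity)
      (mul_div_mul_add_add_le_div (Real.sqrt_pos.2 ha) (Real.sqrt_nonneg b) hu)
  calc _ ≤ 2 * Real.exp (-(a * hexp (u / √a))) := beta_tail_bound_general a b ha hab u hu
    _ ≤ 2 * Real.exp (-(a * hexp (√b * u / (√a * (√b + √a + u))))) := by gcongr
    _ ≤ _ := le_add_of_nonneg_right (by positivity)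

end
end

section
/- Fix d ∈ ℕ and ϑ = (α,β,λ₁,λ₂,γ,C) ∈ (0,∞)^6, and suppose a, b, c ∈ [0,∞) satisfy a/λ₁ + b/λ₂ + c/α < 1. Then sup_{(f,g)∈ℱ_{d,ϑ}} ∫_𝒳 f(x) {M_β(x)^d/f(x)}^a {M_β(x)^d/g(x)}^b (1+‖x‖)^c dx < ∞. Moreover, whenever a ∈ (d/(α+d), 1], sup over densities f on ℝ^d with μ_α(f) ≤ C of ∫_{{f>0}} f(x)^a dx < ∞. -/
open MeasureTheory Filter Set
open scoped ENNReal NNReal BigOperators Topology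

noncomputable section

/-!
Both bounds are pointwise. With `A = M ^ d / f`, `B = M ^ d / g` and `W x = 1 + ‖x‖`, each factor
of `A ^ a * B ^ b * W ^ c` is at most the power `a / λ₁`, `b / λ₂` or `c / α` of
`T = A ^ λ₁ + B ^ λ₂ + W ^ α`; since `T ≥ 1` and these exponents add up to at most `1`, the product
is at most `T`, whose integral against `f` is controlled. For the powers of a density with
`a < 1`, put `r = α * a / (1 - a)`. Then `f ^ a = (f * W ^ α) ^ a * (W ^ (-r)) ^ (1 - a)` is at
most `f * W ^ α + W ^ (-r)`, and `W ^ (-r)` is integrable because `a > d / (α + d)` means exactly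
`r > d`.
-/

section Pointwise

variable {a b c p q s : ℝ}

lemma rpow_le_rpow_div_of_rpow_le {x t : ℝ≥0∞} (ha : 0 ≤ a) (hp : 0 < p) (h : x ^ p ≤ t) :
    x ^ a ≤ t ^ (a / p) := by
  calc x ^ a = (x ^ p) ^ (a / p) := by rw [← ENNReal.rpow_mul, mul_div_cancel₀ a hp.ne']
    _ ≤ t ^ (a / p) := by gcongr

lemma rpow_mul_rpow_mul_rpow_le_add_add {w : ℝ≥0∞} (hp : 0 < p) (hq : 0 < q) (hs : 0 < s)
    (ha : 0 ≤ a) (hb : 0 ≤ b) (hc : 0 ≤ c) (habc : a / p + b / q + c / s ≤ 1) (hw : 1 ≤ w)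
    (x y : ℝ≥0∞) : x ^ a * y ^ b * w ^ c ≤ x ^ p + y ^ q + w ^ s := by
  set t := x ^ p + y ^ q + w ^ s
  have hx : x ^ p ≤ t := le_self_add.trans le_self_add
  have hy : y ^ q ≤ t := le_add_self.trans le_self_add
  have ht : 1 ≤ t := (ENNReal.one_le_rpow hw hs).trans le_add_self
  calc x ^ a * y ^ b * w ^ c ≤ t ^ (a / p) * t ^ (b / q) * t ^ (c / s) := by
        gcongr
        · exact rpow_le_rpow_div_of_rpow_le ha hp hx
        · exact rpow_le_rpow_div_of_rpow_le hb hq hy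
        · exact rpow_le_rpow_div_of_rpow_le hc hs le_add_self
    _ = t ^ (a / p + b / q + c / s) := by
        rw [ENNReal.rpow_add_of_nonneg _ _ (by positivity) (by positivity),
          ENNReal.rpow_add_of_nonneg _ _ (by positivity) (by positivity)]
    _ ≤ t ^ (1 : ℝ) := ENNReal.rpow_le_rpow_of_exponent_le ht habc
    _ = t := ENNReal.rpow_one t

lemma rpow_mul_rpow_one_sub_le_add (ha : 0 ≤ a) (ha1 : a ≤ 1) (x y : ℝ≥0∞) :
    x ^ a * y ^ (1 - a) ≤ x + y := by
  have h1a : 0 ≤ 1 - a := sub_nonneg.2 ha1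
  calc x ^ a * y ^ (1 - a) ≤ (x + y) ^ a * (x + y) ^ (1 - a) := by
        gcongr
        · exact le_self_add
        · exact le_add_self
    _ = x + y := by rw [← ENNReal.rpow_add_of_nonneg _ _ ha h1a, add_sub_cancel, ENNReal.rpow_one]

lemma rpow_le_mul_rpow_add_rpow_neg {w : ℝ≥0∞} (hw : w ≠ 0) (hw' : w ≠ ∞) (ha : 0 ≤ a)
    (ha1 : a < 1) (s : ℝ) (y : ℝ≥0∞) : y ^ a ≤ y * w ^ s + w ^ (-(s * a / (1 - a))) := by
  have hexp : s * a + -(s * a / (1 - a)) * (1 - a) = 0 := by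
    rw [neg_mul, div_mul_cancel₀ _ (sub_pos.2 ha1).ne', add_neg_cancel]
  calc y ^ a = (y * w ^ s) ^ a * (w ^ (-(s * a / (1 - a)))) ^ (1 - a) := by
        rw [ENNReal.mul_rpow_of_nonneg _ _ ha, ← ENNReal.rpow_mul, ← ENNReal.rpow_mul, mul_assoc,
          ← ENNReal.rpow_add _ _ hw hw', hexp, ENNReal.rpow_zero, mul_one]
    _ ≤ y * w ^ s + w ^ (-(s * a / (1 - a))) := rpow_mul_rpow_one_sub_le_add ha ha1.le _ _

lemma lt_mul_div_one_sub_of_div_add_lt {n : ℝ} (hn : 0 ≤ n) (hs : 0 < s) (ha : n / (s + n) < a)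
    (ha1 : a < 1) : n < s * a / (1 - a) := by
  rw [div_lt_iff₀ (by positivity)] at ha
  rw [lt_div_iff₀ (sub_pos.2 ha1)]
  linarith

end Pointwise

section Integral

variable {X : Type*} [MeasurableSpace X] {μ : Measure X} {a b c p q s : ℝ} {f w : X → ℝ≥0∞}

lemma setLIntegral_mul_rpow_mul_rpow_mul_rpow_le (hf : AEMeasurable f μ) (hw : AEMeasurable w μ)
    (hw1 : ∀ x, 1 ≤ w x) (hp : 0 < p) (hq : 0 < q) (hs : 0 < s) (ha : 0 ≤ a) (hb : 0 ≤ b)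
    (hc : 0 ≤ c) (habc : a / p + b / q + c / s ≤ 1) (S : Set X) (A B : X → ℝ≥0∞) :
    ∫⁻ x in S, f x * A x ^ a * B x ^ b * w x ^ c ∂μ ≤
      ∫⁻ x in S, f x * (A x ^ p + B x ^ q) ∂μ + ∫⁻ x, f x * w x ^ s ∂μ := by
  calc ∫⁻ x in S, f x * A x ^ a * B x ^ b * w x ^ c ∂μ
      ≤ ∫⁻ x in S, (f x * (A x ^ p + B x ^ q) + f x * w x ^ s) ∂μ := by
        refine lintegral_mono fun x ↦ ?_
        rw [mul_assoc, mul_assoc, ← mul_add, ← mul_assoc (A x ^ a)]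
        gcongr
        exact rpow_mul_rpow_mul_rpow_le_add_add hp hq hs ha hb hc habc (hw1 x) _ _
    _ = ∫⁻ x in S, f x * (A x ^ p + B x ^ q) ∂μ + ∫⁻ x in S, f x * w x ^ s ∂μ :=
        lintegral_add_right' _ (hf.mul (hw.pow_const s)).restrict
    _ ≤ ∫⁻ x in S, f x * (A x ^ p + B x ^ q) ∂μ + ∫⁻ x, f x * w x ^ s ∂μ := by
        gcongr
        exact Measure.restrict_le_self

lemma lintegral_rpow_le_lintegral_mul_rpow_add (hw : AEMeasurable w μ) (hw0 : ∀ x, w x ≠ 0)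
    (hw_top : ∀ x, w x ≠ ∞) (ha : 0 ≤ a) (ha1 : a < 1) (s : ℝ) :
    ∫⁻ x, f x ^ a ∂μ ≤ ∫⁻ x, f x * w x ^ s ∂μ + ∫⁻ x, w x ^ (-(s * a / (1 - a))) ∂μ := by
  rw [← lintegral_add_right' _ (hw.pow_const _)]
  exact lintegral_mono fun x ↦ rpow_le_mul_rpow_add_rpow_neg (hw0 x) (hw_top x) ha ha1 s (f x)

lemma lintegral_ofReal_eq_one {h : X → ℝ} (hh : ∀ x, 0 ≤ h x) (hh1 : ∫ x, h x ∂μ = 1) :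
    ∫⁻ x, ENNReal.ofReal (h x) ∂μ = 1 := by
  rw [← ofReal_integral_eq_lintegral_ofReal (integrable_of_integral_eq_one hh1) (.of_forall hh),
    hh1, ENNReal.ofReal_one]

end Integral

section Moment

variable {E : Type*} [SeminormedAddGroup E] {α C : ℝ}

lemma ofReal_one_add_norm_rpow (x : E) (r : ℝ) :
    ENNReal.ofReal ((1 + ‖x‖) ^ r) = (1 + ‖x‖ₑ) ^ r := by
  rw [← ENNReal.ofReal_rpow_of_pos (by positivity), ENNReal.ofReal_add zero_le_one (norm_nonneg x),
    ENNReal.ofReal_one, ofReal_norm]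

lemma ofReal_norm_rpow_mul (hα : 0 ≤ α) (x : E) (y : ℝ) :
    ENNReal.ofReal (‖x‖ ^ α * y) = ‖x‖ₑ ^ α * ENNReal.ofReal y := by
  rw [ENNReal.ofReal_mul (by positivity), ← ENNReal.ofReal_rpow_of_nonneg (norm_nonneg x) hα,
    ofReal_norm]

variable [MeasurableSpace E] [OpensMeasurableSpace E] {μ : Measure E}

lemma lintegral_mul_one_add_enorm_rpow_le {f : E → ℝ≥0∞} (hf : AEMeasurable f μ) (hα : 0 ≤ α) :
    ∫⁻ x, f x * (1 + ‖x‖ₑ) ^ α ∂μ ≤ 2 ^ α * (∫⁻ x, f x ∂μ + ∫⁻ x, ‖x‖ₑ ^ α * f x ∂μ) := by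
  rw [← lintegral_add_left' hf, ← lintegral_const_mul'' _ (by fun_prop)]
  refine lintegral_mono fun x ↦ ?_
  calc f x * (1 + ‖x‖ₑ) ^ α ≤ f x * (2 ^ α * (1 ^ α + ‖x‖ₑ ^ α)) := by
        gcongr
        exact ENNReal.add_rpow_le_two_rpow_mul_rpow_add_rpow _ _ hα
    _ = 2 ^ α * (f x + ‖x‖ₑ ^ α * f x) := by
        rw [ENNReal.one_rpow]
        ring

lemma lintegral_ofReal_mul_one_add_enorm_rpow_le {f : E → ℝ} (hα : 0 ≤ α) (hf : ∀ x, 0 ≤ f x)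
    (hf1 : ∫ x, f x ∂μ = 1)
    (hfα : ∫⁻ x, ENNReal.ofReal (‖x‖ ^ α * f x) ∂μ ≤ ENNReal.ofReal C) :
    ∫⁻ x, ENNReal.ofReal (f x) * (1 + ‖x‖ₑ) ^ α ∂μ ≤ 2 ^ α * (1 + ENNReal.ofReal C) := by
  simp only [ofReal_norm_rpow_mul hα] at hfα
  have hf_meas := (integrable_of_integral_eq_one hf1).aemeasurable.ennreal_ofReal
  refine (lintegral_mul_one_add_enorm_rpow_le hf_meas hα).trans ?_
  rw [lintegral_ofReal_eq_one hf hf1]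
  gcongr

lemma setLIntegral_ofReal_mul_rpow_mul_rpow_mul_one_add_norm_rpow_le {a b c p q : ℝ} {f : E → ℝ}
    (hα : 0 < α) (hp : 0 < p) (hq : 0 < q) (ha : 0 ≤ a) (hb : 0 ≤ b) (hc : 0 ≤ c)
    (habc : a / p + b / q + c / α ≤ 1) (hf : ∀ x, 0 ≤ f x) (hf1 : ∫ x, f x ∂μ = 1)
    (hfα : ∫⁻ x, ENNReal.ofReal (‖x‖ ^ α * f x) ∂μ ≤ ENNReal.ofReal C) (S : Set E)
    (A B : E → ℝ≥0∞) :
    ∫⁻ x in S, ENNReal.ofReal (f x) * A x ^ a * B x ^ b * ENNReal.ofReal ((1 + ‖x‖) ^ c) ∂μ ≤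
      ∫⁻ x in S, ENNReal.ofReal (f x) * (A x ^ p + B x ^ q) ∂μ +
        2 ^ α * (1 + ENNReal.ofReal C) := by
  simp only [ofReal_one_add_norm_rpow]
  have hf_meas := (integrable_of_integral_eq_one hf1).aemeasurable.ennreal_ofReal
  refine (setLIntegral_mul_rpow_mul_rpow_mul_rpow_le hf_meas (by fun_prop) (fun _ ↦ le_self_add)
    hp hq hα ha hb hc habc S A B).trans ?_
  gcongr
  exact lintegral_ofReal_mul_one_add_enorm_rpow_le hα.le hf hf1 hfα

end Moment

section Haar

open Module

variable {E : Type*} [NormedAddCommGroup E] [NormedSpace ℝ E] [FiniteDimensional ℝ E]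
  [MeasurableSpace E] [BorelSpace E] (μ : Measure E) [μ.IsAddHaarMeasure] {α : ℝ}

lemma lintegral_one_add_enorm_rpow_neg_lt_top {r : ℝ} (hr : (finrank ℝ E : ℝ) < r) :
    ∫⁻ x, (1 + ‖x‖ₑ) ^ (-r) ∂μ < ∞ := by
  simpa only [ofReal_one_add_norm_rpow] using finite_integral_one_add_norm (μ := μ) hr

theorem exists_forall_lintegral_ofReal_rpow_le {a : ℝ} (hα : 0 < α)
    (ha : (finrank ℝ E : ℝ) / (α + finrank ℝ E) < a) (ha1 : a ≤ 1) (C : ℝ) :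
    ∃ K : ℝ, ∀ f : E → ℝ, (∀ x, 0 ≤ f x) → ∫ x, f x ∂μ = 1 →
      ∫⁻ x, ENNReal.ofReal (‖x‖ ^ α * f x) ∂μ ≤ ENNReal.ofReal C →
      ∫⁻ x, ENNReal.ofReal (f x ^ a) ∂μ ≤ ENNReal.ofReal K := by
  rcases ha1.eq_or_lt with rfl | ha1
  · refine ⟨1, fun f hf hf1 _ ↦ ?_⟩
    simp only [Real.rpow_one, lintegral_ofReal_eq_one hf hf1, ENNReal.ofReal_one, le_refl]
  have ha0 : 0 ≤ a := le_trans (by positivity) ha.le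
  have htail : ∫⁻ x, (1 + ‖x‖ₑ) ^ (-(α * a / (1 - a))) ∂μ ≠ ∞ :=
    (lintegral_one_add_enorm_rpow_neg_lt_top μ
      (lt_mul_div_one_sub_of_div_add_lt (Nat.cast_nonneg _) hα ha ha1)).ne
  refine ⟨(2 ^ α * (1 + ENNReal.ofReal C) +
    ∫⁻ x, (1 + ‖x‖ₑ) ^ (-(α * a / (1 - a))) ∂μ).toReal, fun f hf hf1 hfα ↦ ?_⟩
  rw [ENNReal.ofReal_toReal (by finiteness)]
  simp only [← ENNReal.ofReal_rpow_of_nonneg (hf _) ha0]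
  refine (lintegral_rpow_le_lintegral_mul_rpow_add (w := fun x ↦ 1 + ‖x‖ₑ) (by fun_prop)
    (fun _ ↦ by simp) (fun _ ↦ by finiteness) ha0 ha1 α).trans ?_
  gcongr
  exact lintegral_ofReal_mul_one_add_enorm_rpow_le hα.le hf hf1 hfα

theorem generalised_holder_bounds_general {lam1 lam2 a b c : ℝ} (hα : 0 < α) (hlam1 : 0 < lam1)
    (hlam2 : 0 < lam2) (ha : 0 ≤ a) (hb : 0 ≤ b) (hc : 0 ≤ c)
    (habc : a / lam1 + b / lam2 + c / α ≤ 1) (C : ℝ) :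
    (∃ K : ℝ, ∀ f : E → ℝ, (∀ x, 0 ≤ f x) → ∫ x, f x ∂μ = 1 →
      ∫⁻ x, ENNReal.ofReal (‖x‖ ^ α * f x) ∂μ ≤ ENNReal.ofReal C →
      ∀ (S : Set E) (A B : E → ℝ≥0∞),
        ∫⁻ x in S, ENNReal.ofReal (f x) * (A x ^ lam1 + B x ^ lam2) ∂μ ≤ ENNReal.ofReal C →
        ∫⁻ x in S, ENNReal.ofReal (f x) * A x ^ a * B x ^ b * ENNReal.ofReal ((1 + ‖x‖) ^ c) ∂μ ≤
          ENNReal.ofReal K) ∧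
    (∀ a' : ℝ, (finrank ℝ E : ℝ) / (α + finrank ℝ E) < a' → a' ≤ 1 →
      ∃ K : ℝ, ∀ f : E → ℝ, (∀ x, 0 ≤ f x) → ∫ x, f x ∂μ = 1 →
        ∫⁻ x, ENNReal.ofReal (‖x‖ ^ α * f x) ∂μ ≤ ENNReal.ofReal C →
        ∫⁻ x, ENNReal.ofReal (f x ^ a') ∂μ ≤ ENNReal.ofReal K) := by
  refine ⟨⟨(ENNReal.ofReal C + 2 ^ α * (1 + ENNReal.ofReal C)).toReal,
    fun f hf hf1 hfα S A B hAB ↦ ?_⟩,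
    fun a' ha' ha1' ↦ exists_forall_lintegral_ofReal_rpow_le μ hα ha' ha1' C⟩
  rw [ENNReal.ofReal_toReal (by finiteness)]
  refine (setLIntegral_ofReal_mul_rpow_mul_rpow_mul_one_add_norm_rpow_le hα hlam1 hlam2 ha hb hc
    habc hf hf1 hfα S A B).trans ?_
  gcongr

end Haar

/-- Lemma (generalised Hölder bounds for the classes `ℱ_{d,ϑ}`). -/
theorem generalised_holder_bounds
    (d : ℕ) (hd : 0 < d)
    (α β lam1 lam2 γ C : ℝ)
    (hα : 0 < α) (hβ : 0 < β) (hlam1 : 0 < lam1) (hlam2 : 0 < lam2)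
    (hγ : 0 < γ) (hC : 0 < C)
    (a b c : ℝ) (ha : 0 ≤ a) (hb : 0 ≤ b) (hcc : 0 ≤ c)
    (habc : a / lam1 + b / lam2 + c / α < 1) :
    (∃ B : ℝ, ∀ f g : Euc d → ℝ, (f, g) ∈ Fclass d α β lam1 lam2 γ C →
      (∫⁻ x in suppXY f g,
          ENNReal.ofReal (f x) *
            (MlocPair β f g x ^ (d : ℝ) / ENNReal.ofReal (f x)) ^ a *
            (MlocPair β f g x ^ (d : ℝ) / ENNReal.ofReal (g x)) ^ b *
            ENNReal.ofReal ((1 + ‖x‖) ^ c)) ≤ ENNReal.ofReal B) ∧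
    (∀ a' : ℝ, (d : ℝ) / (α + d) < a' → a' ≤ 1 →
      ∃ B : ℝ, ∀ f : Euc d → ℝ, IsDensity f →
        (∫⁻ x, ENNReal.ofReal (‖x‖ ^ α * f x)) ≤ ENNReal.ofReal C →
        (∫⁻ x in {x | 0 < f x}, ENNReal.ofReal (f x ^ a')) ≤ ENNReal.ofReal B) := by
  obtain ⟨⟨K, hK⟩, hpow⟩ := generalised_holder_bounds_general (volume : Measure (Euc d)) hα hlam1
    hlam2 ha hb hcc habc.le C
  rw [finrank_euclideanSpace_fin] at hpow
  exact ⟨⟨K, fun f g ⟨⟨hf, hfα, _⟩, _, _, _, _, hfg⟩ ↦ hK f hf.2.1 hf.2.2 hfα _ _ _ hfg⟩,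
    fun a' ha' ha1' ↦ (hpow a' ha' ha1').imp fun B hB f hf hfα ↦
      (setLIntegral_le_lintegral _ _).trans (hB f hf.2.1 hf.2.2 hfα)⟩

end
end

section
/- Let a, b, c ∈ ℝ be fixed constants, and let k^L ≤ k^U be deterministic sequences of positive integers with k^L → ∞ and k^U/n → 0 as n → ∞. Then ∫₀¹ ∫₀¹ |B_{j+a, l+b, n+c−j−l}(s,t) − B_{j+a, n−j}(s) B_{l+b, n−l}(t)| ds dt ≤ ((jl)^{1/2}/n)(1 + o(1)) as n → ∞, uniformly for j, l ∈ {k^L, …, k^U}; that is, for every ε > 0 there exists N such that for all n ≥ N and all j, l ∈ {k^L, …, k^U}, the left-hand side is at most (1+ε)(jl)^{1/2}/n. -/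
open MeasureTheory Filter Set
open scoped ENNReal NNReal BigOperators Topology

noncomputable section

/-- The `Beta(p,q)` density. -/
def betaPdf (p q s : ℝ) : ℝ :=
  s ^ (p - 1) * (1 - s) ^ (q - 1) * Real.Gamma (p + q) / (Real.Gamma p * Real.Gamma q)

/-- The two-dimensional `Dirichlet(p,q,r)` density. -/
def dirPdf (p q r s t : ℝ) : ℝ :=
  if 0 < s ∧ 0 < t ∧ s + t < 1 then
    Real.Gamma (p + q + r) / (Real.Gamma p * Real.Gamma q * Real.Gamma r) *
      (s ^ (p - 1) * t ^ (q - 1) * (1 - s - t) ^ (r - 1))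
  else 0


/-!
Write `D` for the Dirichlet(`p, q, r`) density. It factors as marginal times conditional in two
ways: with `v = t / (1 - s)` and `w = s / (1 - t)`,
`(1 - s) D = B_{p, q+r}(s) B_{q, r}(v)` and `(1 - t) D = B_{q, p+r}(t) B_{p, r}(w)`.
Multiplying the two shows that `D²` divided by the product of its marginals is, up to the factor
`(1 - s) (1 - t)`, a product of Beta densities in `v` and `w`. Hence the `χ²`-integral of `D`
against the product of its marginals equals `E[1 / (1 - V W)]` for independent `V ∼ Beta(q, r)`,
`W ∼ Beta(p, r)`, and `1 / (1 - V W) ≤ 1 + V W / (1 - V)` bounds it by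
`1 + p q / ((r - 1) (p + r))`. Cauchy–Schwarz turns this into an `L¹` bound asymptotic to
`√(j l) / n`. The marginals of the Dirichlet density differ from the stated Beta densities by a
bounded shift of the second parameter, which costs `O((√j + √l) / n)`; this is negligible because
`j` and `l` tend to infinity.
-/

section General

variable {α β : Type*} [MeasurableSpace α] [MeasurableSpace β] {μ : Measure α} {ν : Measure β}

/-- `f` is a probability density with respect to `μ`; nonnegativity is only required almost
everywhere. -/
structure IsProbDensity (μ : Measure α) (f : α → ℝ) : Prop where
  integrable : Integrable f μ
  nonneg : 0 ≤ᵐ[μ] f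
  integral_eq_one : ∫ x, f x ∂μ = 1

lemma IsProbDensity.of_lintegral_eq_one {f : α → ℝ} (hfm : AEStronglyMeasurable f μ)
    (hf₀ : 0 ≤ᵐ[μ] f) (hf : ∫⁻ x, ENNReal.ofReal (f x) ∂μ = 1) : IsProbDensity μ f where
  integrable := ⟨hfm, by simp [hasFiniteIntegral_iff_ofReal hf₀, hf]⟩
  nonneg := hf₀
  integral_eq_one := by simp [integral_eq_lintegral_of_nonneg_ae hf₀ hfm, hf]

lemma IsProbDensity.lintegral_eq_one {f : α → ℝ} (hf : IsProbDensity μ f) :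
    ∫⁻ x, ENNReal.ofReal (f x) ∂μ = 1 := by
  rw [← ofReal_integral_eq_lintegral_ofReal hf.integrable hf.nonneg, hf.integral_eq_one,
    ENNReal.ofReal_one]

lemma IsProbDensity.prod [SFinite μ] [SFinite ν] {f : α → ℝ} {g : β → ℝ}
    (hf : IsProbDensity μ f) (hg : IsProbDensity ν g) :
    IsProbDensity (μ.prod ν) fun z => f z.1 * g z.2 where
  integrable := hf.integrable.mul_prod hg.integrable
  nonneg := by
    filter_upwards [Measure.quasiMeasurePreserving_fst.ae hf.nonneg,
      Measure.quasiMeasurePreserving_snd.ae hg.nonneg] with z hz₁ hz₂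
    exact mul_nonneg hz₁ hz₂
  integral_eq_one := by
    rw [integral_prod_mul f g, hf.integral_eq_one, hg.integral_eq_one, one_mul]

lemma integral_abs_sub_le_add {f g h : α → ℝ} (hf : Integrable f μ) (hg : Integrable g μ)
    (hh : Integrable h μ) :
    ∫ x, |f x - h x| ∂μ ≤ ∫ x, |f x - g x| ∂μ + ∫ x, |g x - h x| ∂μ :=
  (integral_mono (hf.sub hh).abs ((hf.sub hg).abs.add (hg.sub hh).abs)
    fun x => abs_sub_le (f x) (g x) (h x)).trans_eq (integral_add (hf.sub hg).abs (hg.sub hh).abs)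

lemma IsProbDensity.integral_abs_sub_le_two_mul {f g : α → ℝ} (hf : IsProbDensity μ f)
    (hg : IsProbDensity μ g) (κ : ℝ) :
    ∫ x, |f x - g x| ∂μ ≤ 2 * ∫ x, |f x - κ * g x| ∂μ := by
  have hκg : Integrable (fun x => κ * g x) μ := hg.integrable.const_mul κ
  have hscale : ∫ x, |κ * g x - g x| ∂μ = |1 - κ| := calc
    ∫ x, |κ * g x - g x| ∂μ = ∫ x, |1 - κ| * g x ∂μ := by
      refine integral_congr_ae ?_
      filter_upwards [hg.nonneg] with x hx
      rw [← sub_one_mul, abs_mul, abs_of_nonneg hx, abs_sub_comm]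
    _ = |1 - κ| := by rw [integral_const_mul, hg.integral_eq_one, mul_one]
  have hκ : |1 - κ| ≤ ∫ x, |f x - κ * g x| ∂μ := calc
    |1 - κ| = |∫ x, (f x - κ * g x) ∂μ| := by
      rw [integral_sub hf.integrable hκg, integral_const_mul, hf.integral_eq_one,
        hg.integral_eq_one, mul_one]
    _ ≤ ∫ x, |f x - κ * g x| ∂μ := abs_integral_le_integral_abs
  linarith [integral_abs_sub_le_add hf.integrable hκg hg.integrable]

lemma integral_abs_mul_sub_mul_le [SFinite μ] [SFinite ν] {f f' : α → ℝ} {g g' : β → ℝ}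
    (hf : IsProbDensity μ f) (hf' : Integrable f' μ) (hg : Integrable g ν)
    (hg' : IsProbDensity ν g') :
    ∫ z, |f z.1 * g z.2 - f' z.1 * g' z.2| ∂(μ.prod ν) ≤
      ∫ x, |f x - f' x| ∂μ + ∫ y, |g y - g' y| ∂ν := by
  have hsnd : ∫ z, |f z.1 * g z.2 - f z.1 * g' z.2| ∂(μ.prod ν) = ∫ y, |g y - g' y| ∂ν := calc
    _ = ∫ z, f z.1 * |g z.2 - g' z.2| ∂(μ.prod ν) := by
      refine integral_congr_ae ?_
      filter_upwards [Measure.quasiMeasurePreserving_fst.ae hf.nonneg] with z hz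
      rw [← mul_sub, abs_mul, abs_of_nonneg hz]
    _ = ∫ y, |g y - g' y| ∂ν := by
      rw [integral_prod_mul f fun y => |g y - g' y|, hf.integral_eq_one, one_mul]
  have hfst : ∫ z, |f z.1 * g' z.2 - f' z.1 * g' z.2| ∂(μ.prod ν) = ∫ x, |f x - f' x| ∂μ := calc
    _ = ∫ z, |f z.1 - f' z.1| * g' z.2 ∂(μ.prod ν) := by
      refine integral_congr_ae ?_
      filter_upwards [Measure.quasiMeasurePreserving_snd.ae hg'.nonneg] with z hz
      rw [← sub_mul, abs_mul, abs_of_nonneg hz]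
    _ = ∫ x, |f x - f' x| ∂μ := by
      rw [integral_prod_mul (fun x => |f x - f' x|) g', hg'.integral_eq_one, mul_one]
  have htri := integral_abs_sub_le_add (hf.integrable.mul_prod hg)
    (hf.integrable.mul_prod hg'.integrable) (hf'.mul_prod hg'.integrable)
  rw [hsnd, hfst] at htri
  linarith

lemma integrable_of_lintegral_le {f : α → ℝ} (hfm : AEStronglyMeasurable f μ) (hf₀ : 0 ≤ᵐ[μ] f)
    {C : ℝ} (hf : ∫⁻ x, ENNReal.ofReal (f x) ∂μ ≤ ENNReal.ofReal C) : Integrable f μ :=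
  ⟨hfm, (hasFiniteIntegral_iff_ofReal hf₀).2 (hf.trans_lt ENNReal.ofReal_lt_top)⟩

lemma integral_abs_le_sqrt_of_density {g h : α → ℝ} (hg : AEStronglyMeasurable g μ)
    (hh : IsProbDensity μ h) (hpos : ∀ᵐ x ∂μ, 0 < h x)
    (hgh : Integrable (fun x => g x ^ 2 / h x) μ) :
    ∫ x, |g x| ∂μ ≤ √(∫ x, g x ^ 2 / h x ∂μ) := by
  have hsqrt_meas : AEStronglyMeasurable (fun x => √(h x)) μ :=
    Real.continuous_sqrt.comp_aestronglyMeasurable hh.integrable.aestronglyMeasurable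
  have hquot_meas : AEStronglyMeasurable (fun x => |g x| / √(h x)) μ :=
    (continuous_abs.comp_aestronglyMeasurable hg).div₀ hsqrt_meas
  have hsqrt_sq : (fun x => √(h x) ^ 2) =ᵐ[μ] h := by
    filter_upwards [hpos] with x hx using Real.sq_sqrt hx.le
  have hquot_sq : (fun x => (|g x| / √(h x)) ^ 2) =ᵐ[μ] fun x => g x ^ 2 / h x := by
    filter_upwards [hpos] with x hx
    rw [div_pow, sq_abs, Real.sq_sqrt hx.le]
  have hcs := integral_mul_le_Lp_mul_Lq_of_nonneg Real.HolderConjugate.two_two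
    (μ := μ) (f := fun x => |g x| / √(h x)) (g := fun x => √(h x))
    (ae_of_all _ fun x => by positivity) (ae_of_all _ fun x => by positivity)
    (by simpa using (memLp_two_iff_integrable_sq hquot_meas).2 (hgh.congr hquot_sq.symm))
    (by simpa using (memLp_two_iff_integrable_sq hsqrt_meas).2 (hh.integrable.congr hsqrt_sq.symm))
  simp only [Real.rpow_two] at hcs
  rw [integral_congr_ae hquot_sq, integral_congr_ae hsqrt_sq, hh.integral_eq_one, Real.one_rpow,
    mul_one, ← Real.sqrt_eq_rpow] at hcs
  refine (integral_congr_ae ?_).trans_le hcs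
  filter_upwards [hpos] with x hx
  exact (div_mul_cancel₀ _ (Real.sqrt_pos.2 hx).ne').symm

lemma IsProbDensity.integral_abs_sub_le_sqrt {f h : α → ℝ} (hf : IsProbDensity μ f)
    (hh : IsProbDensity μ h) (hpos : ∀ᵐ x ∂μ, 0 < h x) {χ : ℝ} (hχ₀ : 0 ≤ χ)
    (hχ : ∫⁻ x, ENNReal.ofReal (f x ^ 2 / h x) ∂μ ≤ ENNReal.ofReal (1 + χ)) :
    ∫ x, |f x - h x| ∂μ ≤ √χ := by
  have hquot_meas : AEStronglyMeasurable (fun x => f x ^ 2 / h x) μ :=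
    (hf.integrable.aestronglyMeasurable.pow 2).div₀ hh.integrable.aestronglyMeasurable
  have hquot_nonneg : 0 ≤ᵐ[μ] fun x => f x ^ 2 / h x := by
    filter_upwards [hpos] with x hx
    exact div_nonneg (sq_nonneg _) hx.le
  have hquot := integrable_of_lintegral_le hquot_meas hquot_nonneg hχ
  have hquot_le : ∫ x, f x ^ 2 / h x ∂μ ≤ 1 + χ := by
    rw [integral_eq_lintegral_of_nonneg_ae hquot_nonneg hquot_meas]
    exact ENNReal.toReal_le_of_le_ofReal (by linarith) hχ
  have hexpand : (fun x => f x ^ 2 / h x - 2 * f x + h x) =ᵐ[μ]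
      fun x => (f x - h x) ^ 2 / h x := by
    filter_upwards [hpos] with x hx
    field_simp
    ring
  have hlin : Integrable (fun x => f x ^ 2 / h x - 2 * f x) μ :=
    hquot.sub (hf.integrable.const_mul 2)
  refine (integral_abs_le_sqrt_of_density (hf.integrable.sub hh.integrable).aestronglyMeasurable hh
    hpos ((hlin.add hh.integrable).congr hexpand)).trans (Real.sqrt_le_sqrt ?_)
  calc ∫ x, (f x - h x) ^ 2 / h x ∂μ
      = ∫ x, f x ^ 2 / h x ∂μ - 2 * 1 + 1 := by
        rw [← integral_congr_ae hexpand, integral_add hlin hh.integrable,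
          integral_sub hquot (hf.integrable.const_mul 2), integral_const_mul, hf.integral_eq_one,
          hh.integral_eq_one]
    _ ≤ χ := by linarith

end General

/-- Lebesgue measure on the open unit interval, the reference measure of the Beta densities; the
Dirichlet densities live on its square. -/
abbrev unitVolume : Measure ℝ := volume.restrict (Ioo 0 1)

section UnitVolume

lemma ae_unitVolume_of_forall {P : ℝ → Prop} (h : ∀ s ∈ Ioo (0 : ℝ) 1, P s) :
    ∀ᵐ s ∂unitVolume, P s :=
  ae_restrict_of_forall_mem measurableSet_Ioo h

lemma ae_unitVolume_prod_of_forall {P : ℝ × ℝ → Prop}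
    (h : ∀ z : ℝ × ℝ, z.1 ∈ Ioo (0 : ℝ) 1 → z.2 ∈ Ioo (0 : ℝ) 1 → P z) :
    ∀ᵐ z ∂unitVolume.prod unitVolume, P z := by
  rw [Measure.prod_restrict]
  exact ae_restrict_of_forall_mem (measurableSet_Ioo.prod measurableSet_Ioo)
    fun z hz => h z hz.1 hz.2

lemma lintegral_unitVolume_eq_mul_lintegral_comp_mul {a : ℝ} (ha₀ : 0 < a) (ha₁ : a ≤ 1)
    {G : ℝ → ℝ≥0∞} (hG : ∀ t, a ≤ t → G t = 0) :
    ∫⁻ t, G t ∂unitVolume = ∫⁻ v, ENNReal.ofReal a * G (a * v) ∂unitVolume := by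
  have hrestrict : ∫⁻ t, G t ∂unitVolume = ∫⁻ t in Ioo 0 a, G t := by
    rw [← lintegral_inter_add_sdiff G _ (measurableSet_Iio (a := a)),
      setLIntegral_eq_zero (measurableSet_Ioo.diff measurableSet_Iio)
        fun t ht => hG t (not_lt.1 ht.2), add_zero, Ioo_inter_Iio, min_eq_right ha₁]
  have himage : (fun v => a * v) '' Ioo 0 1 = Ioo 0 a := by
    rw [image_mul_left_Ioo ha₀, mul_zero, mul_one]
  have hderiv : ∀ v ∈ Ioo (0 : ℝ) 1, HasDerivWithinAt (fun v => a * v) a (Ioo 0 1) v :=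
    fun v _ => (hasDerivAt_const_mul a).hasDerivWithinAt
  rw [hrestrict, ← himage, lintegral_image_eq_lintegral_abs_deriv_mul measurableSet_Ioo hderiv
    (mul_right_injective₀ ha₀.ne').injOn G, abs_of_pos ha₀]

lemma one_sub_mul_pos {v w : ℝ} (hv : v < 1) (hw : w ∈ Ioo (0 : ℝ) 1) : 0 < 1 - v * w := by
  nlinarith [hw.1, hw.2]

lemma lintegral_unitVolume_eq_lintegral_comp_mobius {v : ℝ} (hv : v < 1) (G : ℝ → ℝ≥0∞) :
    ∫⁻ s, G s ∂unitVolume = ∫⁻ w, ENNReal.ofReal ((1 - v) / (1 - v * w) ^ 2) *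
      G ((1 - v) * w / (1 - v * w)) ∂unitVolume := by
  have hv' : 0 < 1 - v := sub_pos.2 hv
  have himage : (fun w => (1 - v) * w / (1 - v * w)) '' Ioo 0 1 = Ioo 0 1 := by
    refine Subset.antisymm ?_ fun s hs => ?_
    · rintro _ ⟨w, hw, rfl⟩
      have hden := one_sub_mul_pos hv hw
      exact ⟨div_pos (mul_pos hv' hw.1) hden, (div_lt_one hden).2 (by linarith [hw.2])⟩
    · have hden : 0 < 1 - v + v * s := by nlinarith [hs.1, hs.2]
      have hsub : 1 - v * (s / (1 - v + v * s)) = (1 - v) / (1 - v + v * s) := by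
        field_simp
        ring
      refine ⟨s / (1 - v + v * s), ⟨div_pos hs.1 hden, (div_lt_one hden).2 ?_⟩, ?_⟩
      · nlinarith [hs.2]
      · simp only [hsub]
        field_simp
  have hderiv : ∀ w ∈ Ioo (0 : ℝ) 1, HasDerivWithinAt (fun w => (1 - v) * w / (1 - v * w))
      ((1 - v) / (1 - v * w) ^ 2) (Ioo 0 1) w := fun w hw => by
    have hnum : HasDerivAt (fun w => (1 - v) * w) (1 - v) w := hasDerivAt_const_mul (1 - v)
    have hden : HasDerivAt (fun w => 1 - v * w) (-v) w := (hasDerivAt_const_mul v).const_sub 1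
    convert! (hnum.fun_div hden (one_sub_mul_pos hv hw).ne').hasDerivWithinAt using 2
    ring
  have hinj : InjOn (fun w => (1 - v) * w / (1 - v * w)) (Ioo 0 1) := fun x hx y hy hxy => by
    have hcross := (div_eq_div_iff (one_sub_mul_pos hv hx).ne' (one_sub_mul_pos hv hy).ne').1 hxy
    exact mul_left_cancel₀ hv'.ne' (by linear_combination hcross)
  calc ∫⁻ s, G s ∂unitVolume
      = ∫⁻ w, ENNReal.ofReal |(1 - v) / (1 - v * w) ^ 2| *
          G ((1 - v) * w / (1 - v * w)) ∂unitVolume := by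
        nth_rewrite 1 [unitVolume, ← himage]
        exact lintegral_image_eq_lintegral_abs_deriv_mul measurableSet_Ioo hderiv hinj G
    _ = _ := by simp only [abs_of_nonneg (div_nonneg hv'.le (sq_nonneg _))]

-- The new coordinates are `v = t / (1 - s)` and `w = s / (1 - t)`.
lemma lintegral_unitVolume_prod_eq_lintegral_simplex_coords {G : ℝ × ℝ → ℝ≥0∞}
    (hG : Measurable G) (hG₀ : ∀ s t, 1 - s ≤ t → G (s, t) = 0) :
    ∫⁻ z, G z ∂unitVolume.prod unitVolume =
      ∫⁻ z, ENNReal.ofReal ((1 - z.1) * (1 - z.2) / (1 - z.1 * z.2) ^ 3) *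
        G ((1 - z.1) * z.2 / (1 - z.1 * z.2), (1 - z.2) * z.1 / (1 - z.1 * z.2))
          ∂unitVolume.prod unitVolume := by
  have hscale : ∀ᵐ s ∂unitVolume, ∫⁻ t, G (s, t) ∂unitVolume =
      ∫⁻ v, ENNReal.ofReal (1 - s) * G (s, (1 - s) * v) ∂unitVolume :=
    ae_unitVolume_of_forall fun s hs => lintegral_unitVolume_eq_mul_lintegral_comp_mul
      (sub_pos.2 hs.2) (by linarith [hs.1]) (hG₀ s)
  have hmobius : ∀ᵐ v ∂unitVolume,
      ∫⁻ s, ENNReal.ofReal (1 - s) * G (s, (1 - s) * v) ∂unitVolume =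
        ∫⁻ w, ENNReal.ofReal ((1 - v) * (1 - w) / (1 - v * w) ^ 3) *
          G ((1 - v) * w / (1 - v * w), (1 - w) * v / (1 - v * w)) ∂unitVolume := by
    refine ae_unitVolume_of_forall fun v hv => ?_
    rw [lintegral_unitVolume_eq_lintegral_comp_mobius hv.2]
    refine lintegral_congr_ae (ae_unitVolume_of_forall fun w hw => ?_)
    have hden := one_sub_mul_pos hv.2 hw
    have hs : 1 - (1 - v) * w / (1 - v * w) = (1 - w) / (1 - v * w) := by
      rw [one_sub_div hden.ne']
      ring
    simp only [hs]
    rw [← mul_assoc, ← ENNReal.ofReal_mul (div_nonneg (sub_nonneg.2 hv.2.le) (sq_nonneg _)),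
      div_mul_div_comm, ← pow_succ, div_mul_eq_mul_div]
  rw [lintegral_prod _ hG.aemeasurable, lintegral_congr_ae hscale,
    lintegral_lintegral_swap (by fun_prop), lintegral_congr_ae hmobius,
    lintegral_prod _ (by fun_prop)]

end UnitVolume


section Beta

variable {p q x y z s d : ℝ}

lemma betaPdf_pos (hp : 0 < p) (hq : 0 < q) (hs : s ∈ Ioo (0 : ℝ) 1) : 0 < betaPdf p q s := by
  have hs₁ : 0 < 1 - s := sub_pos.2 hs.2
  have := hs.1
  unfold betaPdf
  positivity

@[fun_prop]
lemma measurable_betaPdf (p q : ℝ) : Measurable (betaPdf p q) := by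
  unfold betaPdf
  fun_prop

lemma betaPdf_eq_inv_beta_mul (p q s : ℝ) :
    betaPdf p q s = 1 / ProbabilityTheory.beta p q * s ^ (p - 1) * (1 - s) ^ (q - 1) := by
  rw [betaPdf, ProbabilityTheory.beta, one_div_div]
  ring

lemma isProbDensity_betaPdf (hp : 0 < p) (hq : 0 < q) :
    IsProbDensity unitVolume (betaPdf p q) := by
  refine .of_lintegral_eq_one (measurable_betaPdf p q).aestronglyMeasurable
    (ae_unitVolume_of_forall fun s hs => (betaPdf_pos hp hq hs).le) ?_
  simp_rw [betaPdf_eq_inv_beta_mul, ← ProbabilityTheory.lintegral_betaPDF,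
    ProbabilityTheory.lintegral_betaPDF_eq_one hp hq]

lemma betaPdf_one_sub (p q s : ℝ) : betaPdf p q (1 - s) = betaPdf q p s := by
  rw [betaPdf, betaPdf, sub_sub_cancel, add_comm p q, mul_comm (Real.Gamma p),
    mul_comm ((1 - s) ^ (p - 1))]

lemma betaPdf_add_one_right (hp : 0 < p) (hx : 0 < x) (hs : s < 1) :
    betaPdf p (x + 1) s = (p + x) / x * ((1 - s) * betaPdf p x s) := by
  have hs₁ : 0 < 1 - s := sub_pos.2 hs
  have hpow : (1 - s) ^ (x + 1 - 1) = (1 - s) ^ (x - 1) * (1 - s) := by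
    rw [← Real.rpow_add_one hs₁.ne', add_sub_right_comm]
  rw [betaPdf, betaPdf, hpow, ← add_assoc, Real.Gamma_add_one (add_pos hp hx).ne',
    Real.Gamma_add_one hx.ne']
  field_simp

lemma betaPdf_add_one_left (hp : 0 < p) (hx : 0 < x) (hs : 0 < s) :
    betaPdf (p + 1) x s = (p + x) / p * (s * betaPdf p x s) := by
  rw [← betaPdf_one_sub x, betaPdf_add_one_right hx hp (by linarith), betaPdf_one_sub,
    sub_sub_cancel, add_comm x]

lemma betaPdf_add_one_sq_div (hp : 0 < p) (hx : 0 < x) (hs : s ∈ Ioo (0 : ℝ) 1) :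
    betaPdf p (x + 1) s ^ 2 / betaPdf p x s =
      (1 + p / (x * (p + x + 1))) * betaPdf p (x + 2) s := by
  have hpdf := betaPdf_pos hp hx hs
  rw [show x + 2 = x + 1 + 1 by ring, betaPdf_add_one_right hp (x := x + 1) (by linarith) hs.2,
    betaPdf_add_one_right hp hx hs.2]
  field_simp
  ring

lemma integral_abs_betaPdf_sub_add_one_le (hp : 0 < p) (hx : 0 < x) :
    ∫ s, |betaPdf p x s - betaPdf p (x + 1) s| ∂unitVolume ≤ √p / x := by
  have hchi_nonneg : 0 ≤ p / (x * (p + x + 1)) := by positivity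
  have hchi : ∫⁻ s, ENNReal.ofReal (betaPdf p (x + 1) s ^ 2 / betaPdf p x s) ∂unitVolume =
      ENNReal.ofReal (1 + p / (x * (p + x + 1))) := calc
    _ = ∫⁻ s, ENNReal.ofReal (1 + p / (x * (p + x + 1))) *
          ENNReal.ofReal (betaPdf p (x + 2) s) ∂unitVolume :=
        lintegral_congr_ae <| ae_unitVolume_of_forall fun s hs => by
          simp only [betaPdf_add_one_sq_div hp hx hs,
            ENNReal.ofReal_mul (add_nonneg zero_le_one hchi_nonneg)]
    _ = _ := by
        rw [lintegral_const_mul _ (by fun_prop),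
          (isProbDensity_betaPdf hp (by linarith)).lintegral_eq_one, mul_one]
  calc ∫ s, |betaPdf p x s - betaPdf p (x + 1) s| ∂unitVolume
      = ∫ s, |betaPdf p (x + 1) s - betaPdf p x s| ∂unitVolume := by simp only [abs_sub_comm]
    _ ≤ √(p / (x * (p + x + 1))) :=
        (isProbDensity_betaPdf hp (by linarith)).integral_abs_sub_le_sqrt
          (isProbDensity_betaPdf hp hx)
          (ae_unitVolume_of_forall fun s hs => betaPdf_pos hp hx hs) hchi_nonneg hchi.le
    _ ≤ √(p / x ^ 2) := by
        refine Real.sqrt_le_sqrt (div_le_div_of_nonneg_left hp.le (by positivity) ?_)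
        nlinarith
    _ = √p / x := by rw [Real.sqrt_div hp.le, Real.sqrt_sq hx.le]

lemma abs_one_sub_rpow_le {v : ℝ} (hv : 0 ≤ v) (hd₀ : 0 ≤ d) (hd₁ : d ≤ 1) :
    |1 - v ^ d| ≤ |1 - v| := by
  rcases le_total v 1 with h | h
  · rw [abs_of_nonneg (sub_nonneg.2 (Real.rpow_le_one hv h hd₀)), abs_of_nonneg (sub_nonneg.2 h)]
    linarith [Real.self_le_rpow_of_le_one hv h hd₁]
  · rw [abs_sub_comm, abs_sub_comm 1 v,
      abs_of_nonneg (sub_nonneg.2 (Real.one_le_rpow h hd₀)), abs_of_nonneg (sub_nonneg.2 h)]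
    linarith [Real.rpow_le_self_of_one_le h hd₁]

lemma exists_mul_betaPdf_add_eq (hp : 0 < p) (hx : 0 < x) (hd : 0 ≤ d) :
    ∃ κ, ∀ s < 1, κ * betaPdf p (x + d) s = ((p + x) / x * (1 - s)) ^ d * betaPdf p x s := by
  refine ⟨((p + x) / x) ^ d * (ProbabilityTheory.beta p (x + d) / ProbabilityTheory.beta p x),
    fun s hs => ?_⟩
  have hs₁ : 0 < 1 - s := sub_pos.2 hs
  have hbeta := (ProbabilityTheory.beta_pos hp (add_pos_of_pos_of_nonneg hx hd)).ne'
  rw [betaPdf_eq_inv_beta_mul, betaPdf_eq_inv_beta_mul, Real.mul_rpow (by positivity) hs₁.le,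
    add_sub_right_comm, Real.rpow_add hs₁]
  field_simp

-- Write `v = (p + x) / x * (1 - s)`. Multiplying `betaPdf p x` by `v` gives `betaPdf p (x + 1)`,
-- multiplying it by `v ^ d` gives a multiple of `betaPdf p (x + d)`, and `v ^ d` is closer to `1`
-- than `v`.
lemma integral_abs_betaPdf_sub_add_le (hp : 0 < p) (hx : 0 < x) (hd₀ : 0 ≤ d) (hd₁ : d ≤ 1) :
    ∫ s, |betaPdf p x s - betaPdf p (x + d) s| ∂unitVolume ≤ 2 * (√p / x) := by
  obtain ⟨κ, hκ⟩ := exists_mul_betaPdf_add_eq hp hx hd₀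
  have hpdf := isProbDensity_betaPdf hp hx
  have hpdf_add := isProbDensity_betaPdf hp (add_pos_of_pos_of_nonneg hx hd₀)
  refine (hpdf.integral_abs_sub_le_two_mul hpdf_add κ).trans ?_
  refine mul_le_mul_of_nonneg_left ?_ zero_le_two
  refine (integral_mono_ae (hpdf.integrable.sub (hpdf_add.integrable.const_mul κ)).abs
    (hpdf.integrable.sub (isProbDensity_betaPdf hp (by linarith)).integrable).abs
    (ae_unitVolume_of_forall fun s hs => ?_)).trans (integral_abs_betaPdf_sub_add_one_le hp hx)
  have hv : 0 ≤ (p + x) / x * (1 - s) := by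
    have := sub_pos.2 hs.2
    positivity
  simp only [Pi.sub_apply]
  rw [hκ s hs.2, betaPdf_add_one_right hp hx hs.2, ← mul_assoc, ← one_sub_mul, ← one_sub_mul,
    abs_mul, abs_mul]
  exact mul_le_mul_of_nonneg_right (abs_one_sub_rpow_le hv hd₀ hd₁) (abs_nonneg _)

lemma integral_abs_betaPdf_sub_le_of_le (hp : 0 < p) (hz : 0 < z) {D : ℕ} (hzx : z ≤ x)
    (hxy : x ≤ y) (hyx : y ≤ x + D) :
    ∫ s, |betaPdf p x s - betaPdf p y s| ∂unitVolume ≤ 2 * D * √p / z := by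
  induction D generalizing x with
  | zero =>
    obtain rfl : x = y := le_antisymm hxy (by simpa using hyx)
    simp
  | succ D ih =>
    push_cast at hyx
    set d := min 1 (y - x)
    have hd₀ : 0 ≤ d := le_min zero_le_one (sub_nonneg.2 hxy)
    have hx : 0 < x := hz.trans_le hzx
    have hstep := integral_abs_betaPdf_sub_add_le hp hx hd₀ (min_le_left _ _)
    have hrest := ih (x := x + d) (by linarith) (by linarith [min_le_right 1 (y - x)])
      (by rcases min_choice 1 (y - x) with h | h <;> linarith [h])
    have hmono : √p / x ≤ √p / z := by gcongr
    have htri := integral_abs_sub_le_add (isProbDensity_betaPdf hp hx).integrable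
      (isProbDensity_betaPdf hp (add_pos_of_pos_of_nonneg hx hd₀)).integrable
      (isProbDensity_betaPdf hp (hx.trans_le hxy)).integrable
    calc _ ≤ 2 * (√p / z) + 2 * D * √p / z := by linarith
      _ = 2 * ↑(D + 1) * √p / z := by
        push_cast
        ring

lemma integral_abs_betaPdf_sub_le (hp : 0 < p) (hz : 0 < z) {D : ℕ} (hzx : z ≤ x) (hzy : z ≤ y)
    (hxy : |x - y| ≤ D) :
    ∫ s, |betaPdf p x s - betaPdf p y s| ∂unitVolume ≤ 2 * D * √p / z := by
  obtain ⟨hyx, hxy⟩ := abs_le.1 hxy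
  rcases le_total x y with h | h
  · exact integral_abs_betaPdf_sub_le_of_le hp hz hzx h (by linarith)
  · simp only [abs_sub_comm (betaPdf p x _)]
    exact integral_abs_betaPdf_sub_le_of_le hp hz hzy h (by linarith)

end Beta

section Dirichlet

variable {p q r s t v w : ℝ}

lemma dirPdf_nonneg (hp : 0 < p) (hq : 0 < q) (hr : 0 < r) (s t : ℝ) : 0 ≤ dirPdf p q r s t := by
  unfold dirPdf
  split_ifs with h
  · obtain ⟨hs, ht, hst⟩ := h
    have : 0 < 1 - s - t := by linarith
    positivity
  · exact le_rfl

@[fun_prop]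
lemma measurable_dirPdf (p q r : ℝ) : Measurable fun z : ℝ × ℝ => dirPdf p q r z.1 z.2 := by
  unfold dirPdf
  refine Measurable.ite ?_ (by fun_prop) measurable_const
  exact (measurableSet_lt measurable_const measurable_fst).inter
    ((measurableSet_lt measurable_const measurable_snd).inter
      (measurableSet_lt (measurable_fst.add measurable_snd) measurable_const))

lemma dirPdf_eq_zero (p q r : ℝ) (h : 1 - s ≤ t) : dirPdf p q r s t = 0 :=
  if_neg fun hst => by linarith [hst.2.2]

lemma dirPdf_swap (p q r s t : ℝ) : dirPdf p q r s t = dirPdf q p r t s := by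
  have hsupp : (0 < s ∧ 0 < t ∧ s + t < 1) ↔ (0 < t ∧ 0 < s ∧ t + s < 1) := by
    rw [and_left_comm, add_comm s t]
  simp only [dirPdf, hsupp]
  rw [add_comm p q, mul_comm (Real.Gamma p), mul_comm (s ^ (p - 1)), sub_right_comm]

lemma one_sub_mul_dirPdf (hq : 0 < q) (hr : 0 < r) (hs : s ∈ Ioo (0 : ℝ) 1)
    (hv : v ∈ Ioo (0 : ℝ) 1) :
    (1 - s) * dirPdf p q r s ((1 - s) * v) = betaPdf p (q + r) s * betaPdf q r v := by
  have hs₁ : 0 < 1 - s := sub_pos.2 hs.2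
  have hv₁ : 0 < 1 - v := sub_pos.2 hv.2
  have hmem : 0 < s ∧ 0 < (1 - s) * v ∧ s + (1 - s) * v < 1 :=
    ⟨hs.1, mul_pos hs₁ hv.1, by nlinarith⟩
  have hpow : (1 - s) ^ (q + r - 1) = (1 - s) * (1 - s) ^ (q - 1) * (1 - s) ^ (r - 1) := by
    rw [← Real.rpow_one_add' hs₁.le (by linarith), ← Real.rpow_add hs₁]
    ring_nf
  have hΓ := (Real.Gamma_pos_of_pos (add_pos hq hr)).ne'
  rw [dirPdf, if_pos hmem, show 1 - s - (1 - s) * v = (1 - s) * (1 - v) by ring,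
    Real.mul_rpow hs₁.le hv.1.le, Real.mul_rpow hs₁.le hv₁.le, betaPdf, betaPdf, hpow,
    ← add_assoc]
  field_simp

lemma isProbDensity_dirPdf (hp : 0 < p) (hq : 0 < q) (hr : 0 < r) :
    IsProbDensity (unitVolume.prod unitVolume) fun z => dirPdf p q r z.1 z.2 := by
  refine .of_lintegral_eq_one (measurable_dirPdf p q r).aestronglyMeasurable
    (ae_of_all _ fun z => dirPdf_nonneg hp hq hr z.1 z.2) ?_
  have hslice : ∀ᵐ s ∂unitVolume, ∫⁻ t, ENNReal.ofReal (dirPdf p q r s t) ∂unitVolume =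
      ∫⁻ v, ENNReal.ofReal (betaPdf p (q + r) s * betaPdf q r v) ∂unitVolume := by
    refine ae_unitVolume_of_forall fun s hs => ?_
    rw [lintegral_unitVolume_eq_mul_lintegral_comp_mul (sub_pos.2 hs.2) (by linarith [hs.1])
      fun t ht => by rw [dirPdf_eq_zero p q r ht, ENNReal.ofReal_zero]]
    refine lintegral_congr_ae (ae_unitVolume_of_forall fun v hv => ?_)
    simp only [← ENNReal.ofReal_mul (sub_nonneg.2 hs.2.le), one_sub_mul_dirPdf hq hr hs hv]
  rw [lintegral_prod _ (by fun_prop), lintegral_congr_ae hslice,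
    ← lintegral_prod (fun z : ℝ × ℝ => ENNReal.ofReal (betaPdf p (q + r) z.1 * betaPdf q r z.2))
      (by fun_prop)]
  exact ((isProbDensity_betaPdf hp (add_pos hq hr)).prod
    (isProbDensity_betaPdf hq hr)).lintegral_eq_one

lemma jacobian_mul_sq_dirPdf_div (hp : 0 < p) (hq : 0 < q) (hr : 0 < r)
    (hv : v ∈ Ioo (0 : ℝ) 1) (hw : w ∈ Ioo (0 : ℝ) 1)
    (hs : s = (1 - v) * w / (1 - v * w)) (ht : t = (1 - w) * v / (1 - v * w)) :
    (1 - v) * (1 - w) / (1 - v * w) ^ 3 *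
        (dirPdf p q r s t ^ 2 / (betaPdf p (q + r) s * betaPdf q (p + r) t)) =
      betaPdf q r v * betaPdf p r w / (1 - v * w) := by
  have hden := one_sub_mul_pos hv.2 hw
  have hv₁ : 0 < 1 - v := sub_pos.2 hv.2
  have hw₁ : 0 < 1 - w := sub_pos.2 hw.2
  have h1s : 1 - s = (1 - w) / (1 - v * w) := by
    rw [hs, one_sub_div hden.ne']
    ring
  have h1t : 1 - t = (1 - v) / (1 - v * w) := by
    rw [ht, one_sub_div hden.ne']
    ring
  have hs_mem : s ∈ Ioo (0 : ℝ) 1 :=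
    ⟨hs ▸ div_pos (mul_pos hv₁ hw.1) hden, sub_pos.1 (h1s ▸ div_pos hw₁ hden)⟩
  have ht_mem : t ∈ Ioo (0 : ℝ) 1 :=
    ⟨ht ▸ div_pos (mul_pos hw₁ hv.1) hden, sub_pos.1 (h1t ▸ div_pos hv₁ hden)⟩
  have hfst := one_sub_mul_dirPdf (p := p) hq hr hs_mem hv
  have hsnd := one_sub_mul_dirPdf (p := q) hp hr ht_mem hw
  rw [show (1 - s) * v = t by rw [h1s, ht]; ring] at hfst
  rw [show (1 - t) * w = s by rw [h1t, hs]; ring, ← dirPdf_swap] at hsnd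
  have hB₁ := betaPdf_pos hp (add_pos hq hr) hs_mem
  have hB₂ := betaPdf_pos hq (add_pos hp hr) ht_mem
  calc _ = (1 - s) * dirPdf p q r s t * ((1 - t) * dirPdf p q r s t) /
        (betaPdf p (q + r) s * betaPdf q (p + r) t) / (1 - v * w) := by
        rw [h1s, h1t]
        field_simp
    _ = _ := by
        rw [hfst, hsnd]
        field_simp

lemma mul_betaPdf_div_one_sub (hq : 0 < q) (hr : 1 < r) (hv : v ∈ Ioo (0 : ℝ) 1) :
    v * betaPdf q r v / (1 - v) = q / (r - 1) * betaPdf (q + 1) (r - 1) v := by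
  have hr₁ : 0 < r - 1 := sub_pos.2 hr
  have hv₁ : 0 < 1 - v := sub_pos.2 hv.2
  obtain ⟨x, rfl⟩ : ∃ x, r = x + 1 := ⟨r - 1, by ring⟩
  rw [add_sub_cancel_right] at hr₁ ⊢
  rw [betaPdf_add_one_right hq hr₁ hv.2, betaPdf_add_one_left hq hr₁ hv.1]
  field_simp

lemma betaPdf_mul_betaPdf_div_le (hp : 0 < p) (hq : 0 < q) (hr : 1 < r)
    (hv : v ∈ Ioo (0 : ℝ) 1) (hw : w ∈ Ioo (0 : ℝ) 1) :
    betaPdf q r v * betaPdf p r w / (1 - v * w) ≤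
      betaPdf q r v * betaPdf p r w +
        p * q / ((r - 1) * (p + r)) * (betaPdf (q + 1) (r - 1) v * betaPdf (p + 1) r w) := by
  have hr₀ : 0 < r := one_pos.trans hr
  have hr₁ : 0 < r - 1 := sub_pos.2 hr
  have hv₁ : 0 < 1 - v := sub_pos.2 hv.2
  have hden := one_sub_mul_pos hv.2 hw
  have hinv : 1 / (1 - v * w) ≤ 1 + v * w / (1 - v) := by
    rw [div_le_iff₀ hden, one_add_div hv₁.ne', div_mul_eq_mul_div, le_div_iff₀ hv₁]
    nlinarith [mul_pos (mul_pos hv.1 hv.1) (mul_pos hw.1 (sub_pos.2 hw.2))]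
  calc betaPdf q r v * betaPdf p r w / (1 - v * w)
      = betaPdf q r v * betaPdf p r w * (1 / (1 - v * w)) := by ring
    _ ≤ betaPdf q r v * betaPdf p r w * (1 + v * w / (1 - v)) :=
        mul_le_mul_of_nonneg_left hinv
          (mul_pos (betaPdf_pos hq hr₀ hv) (betaPdf_pos hp hr₀ hw)).le
    _ = betaPdf q r v * betaPdf p r w +
          v * betaPdf q r v / (1 - v) * (w * betaPdf p r w) := by ring
    _ = _ := by
        rw [mul_betaPdf_div_one_sub hq hr hv, betaPdf_add_one_left hp hr₀ hw.1]
        field_simp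

lemma lintegral_sq_dirPdf_div_eq (hp : 0 < p) (hq : 0 < q) (hr : 0 < r) :
    ∫⁻ z : ℝ × ℝ, ENNReal.ofReal
        (dirPdf p q r z.1 z.2 ^ 2 / (betaPdf p (q + r) z.1 * betaPdf q (p + r) z.2))
        ∂unitVolume.prod unitVolume =
      ∫⁻ z : ℝ × ℝ, ENNReal.ofReal (betaPdf q r z.1 * betaPdf p r z.2 / (1 - z.1 * z.2))
        ∂unitVolume.prod unitVolume := by
  rw [lintegral_unitVolume_prod_eq_lintegral_simplex_coords (by fun_prop)
    fun s t hst => by simp [dirPdf_eq_zero p q r hst]]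
  refine lintegral_congr_ae (ae_unitVolume_prod_of_forall fun z hv hw => ?_)
  have hjac : 0 ≤ (1 - z.1) * (1 - z.2) / (1 - z.1 * z.2) ^ 3 :=
    div_nonneg (mul_nonneg (sub_nonneg.2 hv.2.le) (sub_nonneg.2 hw.2.le))
      (pow_nonneg (one_sub_mul_pos hv.2 hw).le 3)
  dsimp only
  rw [← ENNReal.ofReal_mul hjac, jacobian_mul_sq_dirPdf_div hp hq hr hv hw rfl rfl]

lemma lintegral_sq_dirPdf_div_le (hp : 0 < p) (hq : 0 < q) (hr : 1 < r) :
    ∫⁻ z : ℝ × ℝ, ENNReal.ofReal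
        (dirPdf p q r z.1 z.2 ^ 2 / (betaPdf p (q + r) z.1 * betaPdf q (p + r) z.2))
        ∂unitVolume.prod unitVolume ≤
      ENNReal.ofReal (1 + p * q / ((r - 1) * (p + r))) := by
  have hr₀ : 0 < r := one_pos.trans hr
  have hr₁ : 0 < r - 1 := sub_pos.2 hr
  have hmain := (isProbDensity_betaPdf hq hr₀).prod (isProbDensity_betaPdf hp hr₀)
  have herror := (isProbDensity_betaPdf (add_pos hq one_pos) hr₁).prod
    (isProbDensity_betaPdf (add_pos hp one_pos) hr₀)
  set χ := p * q / ((r - 1) * (p + r))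
  have hχ : 0 ≤ χ := by positivity
  have herror_int := herror.integrable.const_mul χ
  have hnonneg : 0 ≤ᵐ[unitVolume.prod unitVolume] fun z : ℝ × ℝ =>
      betaPdf q r z.1 * betaPdf p r z.2 +
        χ * (betaPdf (q + 1) (r - 1) z.1 * betaPdf (p + 1) r z.2) := by
    filter_upwards [hmain.nonneg, herror.nonneg] with z hz₁ hz₂
    exact add_nonneg hz₁ (mul_nonneg hχ hz₂)
  calc _ = ∫⁻ z : ℝ × ℝ, ENNReal.ofReal (betaPdf q r z.1 * betaPdf p r z.2 / (1 - z.1 * z.2))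
        ∂unitVolume.prod unitVolume := lintegral_sq_dirPdf_div_eq hp hq hr₀
    _ ≤ ∫⁻ z : ℝ × ℝ, ENNReal.ofReal (betaPdf q r z.1 * betaPdf p r z.2 +
          χ * (betaPdf (q + 1) (r - 1) z.1 * betaPdf (p + 1) r z.2))
          ∂unitVolume.prod unitVolume :=
        lintegral_mono_ae <| ae_unitVolume_prod_of_forall fun z hv hw =>
          ENNReal.ofReal_le_ofReal (betaPdf_mul_betaPdf_div_le hp hq hr hv hw)
    _ = ENNReal.ofReal (∫ z : ℝ × ℝ, (betaPdf q r z.1 * betaPdf p r z.2 +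
          χ * (betaPdf (q + 1) (r - 1) z.1 * betaPdf (p + 1) r z.2))
          ∂unitVolume.prod unitVolume) :=
        (ofReal_integral_eq_lintegral_ofReal (hmain.integrable.add herror_int) hnonneg).symm
    _ = ENNReal.ofReal (1 + χ) := by
        rw [integral_add hmain.integrable herror_int, integral_const_mul, hmain.integral_eq_one,
          herror.integral_eq_one, mul_one]

lemma integral_abs_dirPdf_sub_marginals_le (hp : 0 < p) (hq : 0 < q) (hr : 1 < r) :
    ∫ z : ℝ × ℝ, |dirPdf p q r z.1 z.2 - betaPdf p (q + r) z.1 * betaPdf q (p + r) z.2|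
        ∂unitVolume.prod unitVolume ≤ √(p * q / ((r - 1) * (p + r))) := by
  have hr₀ : 0 < r := one_pos.trans hr
  exact (isProbDensity_dirPdf hp hq hr₀).integral_abs_sub_le_sqrt
    ((isProbDensity_betaPdf hp (add_pos hq hr₀)).prod (isProbDensity_betaPdf hq (add_pos hp hr₀)))
    (ae_unitVolume_prod_of_forall fun z hs ht =>
      mul_pos (betaPdf_pos hp (add_pos hq hr₀) hs) (betaPdf_pos hq (add_pos hp hr₀) ht))
    (div_nonneg (mul_pos hp hq).le (mul_pos (sub_pos.2 hr) (add_pos hp hr₀)).le)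
    (lintegral_sq_dirPdf_div_le hp hq hr)

lemma integral_integral_abs_dirPdf_sub_le {x y z : ℝ} {D : ℕ} (hp : 0 < p) (hq : 0 < q)
    (hr : 1 < r) (hz : 0 < z) (hzp : z ≤ p + r) (hzq : z ≤ q + r) (hzx : z ≤ x) (hzy : z ≤ y)
    (hx : |q + r - x| ≤ D) (hy : |p + r - y| ≤ D) :
    ∫ s in Ioo (0 : ℝ) 1, ∫ t in Ioo (0 : ℝ) 1,
        |dirPdf p q r s t - betaPdf p x s * betaPdf q y t| ≤
      √(p * q / ((r - 1) * (p + r))) + 2 * D * (√p + √q) / z := by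
  have hdir := isProbDensity_dirPdf hp hq (one_pos.trans hr)
  have hp_marg := isProbDensity_betaPdf hp (hz.trans_le hzq)
  have hq_marg := isProbDensity_betaPdf hq (hz.trans_le hzp)
  have hpx := isProbDensity_betaPdf hp (hz.trans_le hzx)
  have hqy := isProbDensity_betaPdf hq (hz.trans_le hzy)
  have hmarg := integral_abs_dirPdf_sub_marginals_le hp hq hr
  have hshift := integral_abs_mul_sub_mul_le hp_marg hpx.integrable hq_marg.integrable hqy
  have hshift_p := integral_abs_betaPdf_sub_le hp hz hzq hzx hx
  have hshift_q := integral_abs_betaPdf_sub_le hq hz hzp hzy hy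
  have htri := integral_abs_sub_le_add hdir.integrable (hp_marg.prod hq_marg).integrable
    (hpx.prod hqy).integrable
  calc _ = ∫ u : ℝ × ℝ, |dirPdf p q r u.1 u.2 - betaPdf p x u.1 * betaPdf q y u.2|
        ∂unitVolume.prod unitVolume :=
        (integral_prod _ (hdir.integrable.sub (hpx.prod hqy).integrable).abs).symm
    _ ≤ √(p * q / ((r - 1) * (p + r))) + (2 * D * √p / z + 2 * D * √q / z) := by linarith
    _ = _ := by ring

end Dirichlet

section Asymptotics

variable {P Q R S J L N δ : ℝ}

lemma sqrt_mul_div_mul_le (hδ₀ : 0 < δ) (hδ₁ : δ ≤ 1 / 2) (hJ : 0 ≤ J) (hL : 0 ≤ L) (hN : 0 < N)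
    (hQ₀ : 0 ≤ Q) (hP : P ≤ (1 + δ) * J) (hQ : Q ≤ (1 + δ) * L) (hR : (1 - δ) * N ≤ R)
    (hS : (1 - δ) * N ≤ S) : √(P * Q / (R * S)) ≤ (1 + 4 * δ) * √(J * L) / N := by
  have hδ : 0 < 1 - δ := by linarith
  have hR₀ : 0 ≤ R := (mul_pos hδ hN).le.trans hR
  have hratio : (1 + δ) / (1 - δ) ≤ 1 + 4 * δ := by
    rw [div_le_iff₀ hδ]
    nlinarith
  calc √(P * Q / (R * S))
      ≤ √((1 + δ) * J * ((1 + δ) * L) / ((1 - δ) * N * ((1 - δ) * N))) := by gcongr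
    _ = √(((1 + δ) / (1 - δ) / N) ^ 2 * (J * L)) := by
        congr 1
        field_simp
    _ = (1 + δ) / (1 - δ) / N * √(J * L) := by
        rw [Real.sqrt_mul (sq_nonneg _), Real.sqrt_sq (by positivity)]
    _ ≤ (1 + 4 * δ) / N * √(J * L) := by gcongr
    _ = _ := by ring

lemma mul_sqrt_le_mul_sqrt_mul {K : ℝ} (hδ : 0 ≤ δ) (hJ : 0 ≤ J) (hP : P ≤ 2 * J)
    (hK : 2 * K ^ 2 ≤ δ ^ 2 * L) : K * √P ≤ δ * √(J * L) := by
  calc K * √P ≤ |K| * √(2 * J) := by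
        gcongr
        exact le_abs_self K
    _ = √(J * (2 * K ^ 2)) := by
        rw [← Real.sqrt_sq_eq_abs, ← Real.sqrt_mul (sq_nonneg K)]
        ring_nf
    _ ≤ √(J * (δ ^ 2 * L)) := by gcongr
    _ = δ * √(J * L) := by
        rw [mul_left_comm, Real.sqrt_mul (sq_nonneg δ), Real.sqrt_sq hδ]

lemma integral_integral_abs_dirPdf_sub_le_sqrt_div {a b c : ℝ} {M : ℕ} (hM : 1 ≤ M)
    (ha : |a| ≤ M) (hb : |b| ≤ M) (hc : |c| ≤ M) (hδ₀ : 0 < δ) (hδ₁ : δ ≤ 1 / 2)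
    (hMJ : 128 * (M : ℝ) ^ 2 ≤ δ ^ 2 * J) (hML : 128 * (M : ℝ) ^ 2 ≤ δ ^ 2 * L)
    (hJN : J ≤ δ / 8 * N) (hLN : L ≤ δ / 8 * N) :
    ∫ s in Ioo (0 : ℝ) 1, ∫ t in Ioo (0 : ℝ) 1, |dirPdf (J + a) (L + b) (N + c - J - L) s t -
        betaPdf (J + a) (N - J) s * betaPdf (L + b) (N - L) t| ≤
      (1 + 6 * δ) * √(J * L) / N := by
  obtain ⟨ha₁, ha₂⟩ := abs_le.1 ha
  obtain ⟨hb₁, hb₂⟩ := abs_le.1 hb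
  obtain ⟨hc₁, hc₂⟩ := abs_le.1 hc
  have hM₁ : (1 : ℝ) ≤ M := by exact_mod_cast hM
  have hM_le_sq : (M : ℝ) ≤ 128 * (M : ℝ) ^ 2 := by nlinarith
  have hJ : 0 < J := pos_of_mul_pos_right (by linarith) (sq_nonneg δ)
  have hL : 0 < L := pos_of_mul_pos_right (by linarith) (sq_nonneg δ)
  have hN : 0 < N := pos_of_mul_pos_right (hJ.trans_le hJN) (by positivity)
  have hMJ' : (M : ℝ) ≤ δ * J := by nlinarith [mul_pos hδ₀ hJ]
  have hML' : (M : ℝ) ≤ δ * L := by nlinarith [mul_pos hδ₀ hL]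
  have hδJ : δ * J ≤ 1 / 2 * J := by gcongr
  have hδL : δ * L ≤ 1 / 2 * L := by gcongr
  have hδN : δ * N ≤ 1 / 2 * N := by gcongr
  have hbound := integral_integral_abs_dirPdf_sub_le (p := J + a) (q := L + b)
    (r := N + c - J - L) (x := N - J) (y := N - L) (z := N / 2) (D := 2 * M) (by linarith)
    (by linarith) (by linarith) (by linarith) (by linarith) (by linarith) (by linarith)
    (by linarith) (by push_cast; exact abs_le.2 ⟨by linarith, by linarith⟩)
    (by push_cast; exact abs_le.2 ⟨by linarith, by linarith⟩)
  have hmain : √((J + a) * (L + b) / ((N + c - J - L - 1) * (J + a + (N + c - J - L)))) ≤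
      (1 + 4 * δ) * √(J * L) / N :=
    sqrt_mul_div_mul_le hδ₀ hδ₁ hJ.le hL.le hN (by linarith) (by linarith) (by linarith)
      (by linarith) (by linarith)
  have hshift_p : 8 * M * √(J + a) ≤ δ * √(J * L) :=
    mul_sqrt_le_mul_sqrt_mul hδ₀.le hJ.le (by linarith) (by linarith)
  have hshift_q : 8 * M * √(L + b) ≤ δ * √(L * J) :=
    mul_sqrt_le_mul_sqrt_mul hδ₀.le hL.le (by linarith) (by linarith)
  rw [mul_comm L J] at hshift_q
  calc _ ≤ _ := hbound
    _ = √((J + a) * (L + b) / ((N + c - J - L - 1) * (J + a + (N + c - J - L)))) +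
          (8 * M * √(J + a) + 8 * M * √(L + b)) / N := by
        push_cast
        ring
    _ ≤ (1 + 4 * δ) * √(J * L) / N + (δ * √(J * L) + δ * √(J * L)) / N := by gcongr
    _ = (1 + 6 * δ) * √(J * L) / N := by ring

end Asymptotics

/-- Lemma: total-variation-type comparison of a Dirichlet density with the product of
its Beta marginals, uniformly over `j, l ∈ {k^L,…,k^U}`. -/
theorem dirichlet_vs_product_beta_bound
    (a b c : ℝ) (kL kU : ℕ → ℕ)
    (hkL : Tendsto (fun n : ℕ => kL n) atTop atTop)
    (hkU : Tendsto (fun n : ℕ => (kU n : ℝ) / n) atTop (nhds 0)) :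
    ∀ ε > (0 : ℝ), ∃ N : ℕ, ∀ n : ℕ, N ≤ n → ∀ j l : ℕ,
      kL n ≤ j → j ≤ kU n → kL n ≤ l → l ≤ kU n →
      (∫ s in Set.Ioo (0 : ℝ) 1, ∫ t in Set.Ioo (0 : ℝ) 1,
          |dirPdf ((j : ℝ) + a) ((l : ℝ) + b) ((n : ℝ) + c - j - l) s t -
            betaPdf ((j : ℝ) + a) ((n : ℝ) - j) s *
              betaPdf ((l : ℝ) + b) ((n : ℝ) - l) t|) ≤
        (1 + ε) * Real.sqrt ((j : ℝ) * l) / n := by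
  intro ε hε
  obtain ⟨δ, hδ₀, hδ⟩ : ∃ δ > 0, δ ≤ min (1 / 2) (ε / 6) := ⟨_, by positivity, le_rfl⟩
  obtain ⟨M, hM⟩ := exists_nat_ge (max 1 (max |a| (max |b| |c|)))
  simp only [max_le_iff, Nat.one_le_cast] at hM
  obtain ⟨hM₁, ha, hb, hc⟩ := hM
  have hlarge : ∀ᶠ n in atTop, 128 * (M : ℝ) ^ 2 / δ ^ 2 ≤ kL n :=
    (tendsto_natCast_atTop_atTop.comp hkL).eventually_ge_atTop _
  have hsmall : ∀ᶠ n : ℕ in atTop, (kU n : ℝ) / n < δ / 8 := hkU.eventually_lt_const (by positivity)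
  obtain ⟨N, hN⟩ := eventually_atTop.1 (hlarge.and (hsmall.and (eventually_gt_atTop 0)))
  refine ⟨N, fun n hn j l hkj hjk hkl hlk => ?_⟩
  obtain ⟨hlarge, hsmall, hn₀⟩ := hN n hn
  have hn₀ : (0 : ℝ) < n := by exact_mod_cast hn₀
  rw [div_le_iff₀' (by positivity)] at hlarge
  rw [div_lt_iff₀ hn₀] at hsmall
  have hlower : ∀ i : ℕ, kL n ≤ i → 128 * (M : ℝ) ^ 2 ≤ δ ^ 2 * i := fun i hi =>
    hlarge.trans (by gcongr)
  have hupper : ∀ i : ℕ, i ≤ kU n → (i : ℝ) ≤ δ / 8 * n := fun i hi =>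
    (Nat.cast_le.2 hi).trans hsmall.le
  refine (integral_integral_abs_dirPdf_sub_le_sqrt_div hM₁ ha hb hc hδ₀ (hδ.trans (min_le_left _ _))
    (hlower j hkj) (hlower l hkl) (hupper j hjk) (hupper l hlk)).trans ?_
  gcongr
  linarith [min_le_right (1 / 2) (ε / 6)]

end
end
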